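/- arXiv:2603.04512 — 2 statements merged into one kernel-verified Lean document; each statement's English description precedes it below -/
import Mathlib

section
/- Let 𝒞1 and 𝒞2 be classes of frames closed under disjoint unions, each containing a non-trivial frame, let d ∈ {xd, cd}, and let L_i = Log_d 𝒞_i (i = 1,2). Then the fusion L1 ⊗ L2 does not have the global finite d-model property. -/
namespace OneVarML

/-- One-variable first-order modal formulas over modal signature `M`:
atoms `P n` stand for `Pₙ(x)`, `ex φ` stands for `∃x φ`. -/
inductive OV (M : Type) : Type
  | atom : ℕ → OV M
  | neg  : OV M → OV M
  | and  : OV M → OV M → OV M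
  | ex   : OV M → OV M
  | box  : M → OV M → OV M
  deriving DecidableEq

namespace OV

variable {M M' : Type}

/-- implication, defined from `¬`, `∧` -/
def imp (φ ψ : OV M) : OV M := .neg (.and φ (.neg ψ))

/-- disjunction -/
def or (φ ψ : OV M) : OV M := .neg (.and (.neg φ) (.neg ψ))

/-- universal quantifier `∀x φ := ¬∃x¬φ` -/
def all (φ : OV M) : OV M := .neg (.ex (.neg φ))

/-- renaming of modal operators -/
def mapOp (f : M → M') : OV M → OV M'
  | atom n => atom n
  | neg φ => neg (mapOp f φ)
  | and φ ψ => and (mapOp f φ) (mapOp f ψ)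
  | ex φ => ex (mapOp f φ)
  | box m φ => box (f m) (mapOp f φ)

/-- uniform substitution of one-variable formulas for the atoms `Pₙ(x)` -/
def subst (σ : ℕ → OV M) : OV M → OV M
  | atom n => σ n
  | neg φ => neg (subst σ φ)
  | and φ ψ => and (subst σ φ) (subst σ ψ)
  | ex φ => ex (subst σ φ)
  | box m φ => box m (subst σ φ)

/-- formulas without modal operators -/
def boxFree : OV M → Prop
  | atom _ => True
  | neg φ => boxFree φ
  | and φ ψ => boxFree φ ∧ boxFree ψ
  | ex φ => boxFree φ
  | box _ _ => False

/-- classical evaluation of a (box-free) one-variable formula in a classical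
first-order structure with domain `D`, interpretation `I`, at element `a` -/
def clEval (D : Type) (I : ℕ → Set D) : OV M → D → Prop
  | atom n, a => a ∈ I n
  | neg φ, a => ¬ clEval D I φ a
  | and φ ψ, a => clEval D I φ a ∧ clEval D I ψ a
  | ex φ, _ => ∃ b : D, clEval D I φ b
  | box _ _, _ => True

end OV

/-- the one-variable fragment of classical first-order logic: box-free
formulas valid in all classical structures -/
def FOone (M : Type) : Set (OV M) :=
  {φ | φ.boxFree ∧ ∀ (D : Type) (I : ℕ → Set D) (a : D), OV.clEval D I φ a}

/-- A one-variable `M`-logic: includes one-variable classical FO and the K-axioms,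
closed under Modus Ponens, Generalisation, Necessitation and Substitution. -/
structure IsOVLogic {M : Type} (L : Set (OV M)) : Prop where
  fo : FOone M ⊆ L
  kax : ∀ (m : M) (n k : ℕ),
    OV.imp (.box m (OV.imp (.atom n) (.atom k)))
      (OV.imp (.box m (.atom n)) (.box m (.atom k))) ∈ L
  mp : ∀ φ ψ, OV.imp φ ψ ∈ L → φ ∈ L → ψ ∈ L
  gen : ∀ φ, φ ∈ L → OV.all φ ∈ L
  nec : ∀ m φ, φ ∈ L → OV.box m φ ∈ L
  subst : ∀ (σ : ℕ → OV M) φ, φ ∈ L → OV.subst σ φ ∈ L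

/-- A Kripke `M`-frame. -/
structure KFrame (M : Type) where
  W : Type
  ne : Nonempty W
  R : M → W → W → Prop

/-- the two domain semantics: expanding (`xd`) and constant (`cd`) domains -/
inductive DSem : Type
  | xd | cd
  deriving DecidableEq

/-- A Kripke model (with expanding domains) based on a frame `F`:
a family of classical structures over subsets of one big domain `D`,
expanding along all accessibility relations. -/
structure KModel {M : Type} (F : KFrame M) where
  D : Type
  dom : F.W → Set D
  domNe : ∀ w, (dom w).Nonempty
  expand : ∀ (m : M) (w v : F.W), F.R m w v → dom w ⊆ dom v
  I : F.W → ℕ → Set D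

namespace KModel

variable {M : Type} {F : KFrame M}

/-- a `d`-model: for `cd`, all the domains coincide (with the common domain) -/
def IsD (𝔪 : KModel F) (d : DSem) : Prop :=
  d = DSem.cd → ∀ w, 𝔪.dom w = Set.univ

/-- truth of a formula at a world under an assignment (value of `x`) -/
def eval (𝔪 : KModel F) : OV M → F.W → 𝔪.D → Prop
  | .atom n, w, a => a ∈ 𝔪.I w n
  | .neg φ, w, a => ¬ 𝔪.eval φ w a
  | .and φ ψ, w, a => 𝔪.eval φ w a ∧ 𝔪.eval ψ w a
  | .ex φ, w, _ => ∃ b ∈ 𝔪.dom w, 𝔪.eval φ w b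
  | .box m φ, w, a => ∀ v, F.R m w v → 𝔪.eval φ v a

/-- `φ` is true at `w` if it holds under every assignment into the domain of `w` -/
def TrueAt (𝔪 : KModel F) (φ : OV M) (w : F.W) : Prop :=
  ∀ a ∈ 𝔪.dom w, 𝔪.eval φ w a

/-- `φ` is true in the model if it is true at every world -/
def TrueIn (𝔪 : KModel F) (φ : OV M) : Prop := ∀ w, 𝔪.TrueAt φ w

/-- a finite model: finitely many worlds, all domains finite -/
def FiniteM (𝔪 : KModel F) : Prop := Finite F.W ∧ ∀ w, (𝔪.dom w).Finite

end KModel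

/-- `Log_d 𝒞`: the formulas true in every `d`-model based on a frame from `𝒞` -/
def LogD {M : Type} (d : DSem) (C : Set (KFrame M)) : Set (OV M) :=
  {φ | ∀ F ∈ C, ∀ 𝔪 : KModel F, 𝔪.IsD d → 𝔪.TrueIn φ}

/-- disjoint union of a family of frames -/
def KFrame.disjUnion {M ι : Type} (hι : Nonempty ι) (Fs : ι → KFrame M) : KFrame M where
  W := Σ i, (Fs i).W
  ne := ⟨⟨Classical.choice hι, Classical.choice (Fs (Classical.choice hι)).ne⟩⟩
  R := fun m a b => ∃ (i : ι) (w v : (Fs i).W), (Fs i).R m w v ∧ a = ⟨i, w⟩ ∧ b = ⟨i, v⟩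

/-- a class of frames closed under (arbitrary) disjoint unions -/
def ClosedDU {M : Type} (C : Set (KFrame M)) : Prop :=
  ∀ (ι : Type) (hι : Nonempty ι) (Fs : ι → KFrame M),
    (∀ i, Fs i ∈ C) → KFrame.disjUnion hι Fs ∈ C

/-- reduct of a frame along a map of modal signatures -/
def KFrame.reduct {M M' : Type} (f : M' → M) (F : KFrame M) : KFrame M' :=
  ⟨F.W, F.ne, fun m => F.R (f m)⟩

/-- fusion `𝒞1 ⊗ 𝒞2` of classes of frames: the frames over a common set of worlds
whose `M1`-reduct is in `𝒞1` and whose `M2`-reduct is in `𝒞2` -/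
def frameFusion {M1 M2 : Type} (C1 : Set (KFrame M1)) (C2 : Set (KFrame M2)) :
    Set (KFrame (M1 ⊕ M2)) :=
  {F | F.reduct Sum.inl ∈ C1 ∧ F.reduct Sum.inr ∈ C2}

/-- fusion `L1 ⊗ L2` of one-variable logics: the smallest one-variable
`(M1 ⊕ M2)`-logic containing (the copies of) `L1` and `L2` -/
def fusion {M1 M2 : Type} (L1 : Set (OV M1)) (L2 : Set (OV M2)) : Set (OV (M1 ⊕ M2)) :=
  ⋂₀ {L | IsOVLogic L ∧ OV.mapOp Sum.inl '' L1 ⊆ L ∧ OV.mapOp Sum.inr '' L2 ⊆ L}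

/-- local derivability from a logic: closure under Modus Ponens and Generalisation -/
inductive Deriv {M : Type} (L : Set (OV M)) : OV M → Prop
  | ax {φ} : φ ∈ L → Deriv L φ
  | mp {φ ψ} : Deriv L (OV.imp φ ψ) → Deriv L φ → Deriv L ψ
  | gen {φ} : Deriv L φ → Deriv L (OV.all φ)

/-- global consequence `φ ⊢*_L ψ`: `ψ` is in the smallest set including `L ∪ {φ}`
closed under Modus Ponens, Generalisation and Necessitation -/
inductive GlobalConseq {M : Type} (L : Set (OV M)) (φ : OV M) : OV M → Prop
  | ax {ψ} : ψ ∈ L → GlobalConseq L φ ψ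
  | prem : GlobalConseq L φ φ
  | mp {ψ χ} : GlobalConseq L φ (OV.imp ψ χ) → GlobalConseq L φ ψ → GlobalConseq L φ χ
  | gen {ψ} : GlobalConseq L φ ψ → GlobalConseq L φ (OV.all ψ)
  | nec (m : M) {ψ} : GlobalConseq L φ ψ → GlobalConseq L φ (OV.box m ψ)

/-- `L` is `d`-complete for `𝒞` -/
def DComplete {M : Type} (d : DSem) (L : Set (OV M)) (C : Set (KFrame M)) : Prop :=
  L = LogD d C

/-- `L` is globally `d`-complete for `𝒞` -/
def GloballyDComplete {M : Type} (d : DSem) (L : Set (OV M)) (C : Set (KFrame M)) : Prop :=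
  ∀ φ ψ, GlobalConseq L φ ψ ↔
    ∀ F ∈ C, ∀ 𝔪 : KModel F, 𝔪.IsD d → 𝔪.TrueIn φ → 𝔪.TrueIn ψ

/-- a non-trivial frame: some `R_□` relates two distinct worlds -/
def KFrame.Nontrivial {M : Type} (F : KFrame M) : Prop :=
  ∃ (m : M) (w v : F.W), w ≠ v ∧ F.R m w v

/-- the fixed Gödel numbering of one-variable formulas (relative to a numbering
`eM` of modal operators) -/
def OV.encode {M : Type} (eM : M → ℕ) : OV M → ℕ
  | .atom n => Nat.pair 0 n
  | .neg φ => Nat.pair 1 (OV.encode eM φ)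
  | .and φ ψ => Nat.pair 2 (Nat.pair (OV.encode eM φ) (OV.encode eM ψ))
  | .ex φ => Nat.pair 3 (OV.encode eM φ)
  | .box m φ => Nat.pair 4 (Nat.pair (eM m) (OV.encode eM φ))

/-- `L` is decidable: membership in `L` is computable w.r.t. the Gödel numbering -/
def DecidableLogic {M : Type} (eM : M → ℕ) (L : Set (OV M)) : Prop :=
  ComputablePred (fun n : ℕ => ∃ φ ∈ L, OV.encode eM φ = n)

/-- `L` is globally decidable: the global consequence relation is computable -/
def GloballyDecidable {M : Type} (eM : M → ℕ) (L : Set (OV M)) : Prop :=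
  ComputablePred (fun p : ℕ × ℕ =>
    ∃ φ ψ, GlobalConseq L φ ψ ∧ OV.encode eM φ = p.1 ∧ OV.encode eM ψ = p.2)

/-- the (local) finite `d`-model property -/
def FMP {M : Type} (d : DSem) (L : Set (OV M)) : Prop :=
  ∀ φ, φ ∉ L → ∃ (F : KFrame M) (𝔪 : KModel F), 𝔪.IsD d ∧ 𝔪.FiniteM ∧
    (∀ χ ∈ L, 𝔪.TrueIn χ) ∧ ∃ w, ¬ 𝔪.TrueAt φ w

/-- the global finite `d`-model property -/
def GlobalFMP {M : Type} (d : DSem) (L : Set (OV M)) : Prop :=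
  ∀ φ ψ, ¬ GlobalConseq L φ ψ →
    ∃ (F : KFrame M) (𝔪 : KModel F), 𝔪.IsD d ∧ 𝔪.FiniteM ∧
      (∀ χ ∈ L, 𝔪.TrueIn χ) ∧ 𝔪.TrueIn φ ∧ ∃ w, ¬ 𝔪.TrueAt ψ w

end OneVarML

namespace OneVarML

section Aux

variable {M M' : Type}

theorem eval_imp {F : KFrame M} (m : KModel F) (φ ψ : OV M) (w : F.W) (a : m.D) :
    m.eval (OV.imp φ ψ) w a ↔ (m.eval φ w a → m.eval ψ w a) := by
  simp only [OV.imp, KModel.eval]; tauto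

theorem eval_all {F : KFrame M} (m : KModel F) (φ : OV M) (w : F.W) (a : m.D) :
    m.eval (OV.all φ) w a ↔ ∀ b ∈ m.dom w, m.eval φ w b := by
  simp only [OV.all, KModel.eval]; push Not; rfl

/-- model with reinterpreted atoms -/
def substModel {F : KFrame M} (m : KModel F) (σ : ℕ → OV M) : KModel F where
  D := m.D
  dom := m.dom
  domNe := m.domNe
  expand := m.expand
  I := fun w n => {a | m.eval (σ n) w a}

theorem eval_subst {F : KFrame M} (m : KModel F) (σ : ℕ → OV M) (φ : OV M) :
    ∀ (w : F.W) (a : m.D), m.eval (OV.subst σ φ) w a ↔ (substModel m σ).eval φ w a := by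
  induction φ with
  | atom n => intro w a; rfl
  | neg φ ih => intro w a; exact not_congr (ih w a)
  | and φ ψ ih1 ih2 => intro w a; exact and_congr (ih1 w a) (ih2 w a)
  | ex φ ih => intro w a; exact exists_congr fun b => and_congr Iff.rfl (ih w b)
  | box k φ ih => intro w a; exact forall_congr' fun v => imp_congr Iff.rfl (ih v a)

theorem eval_cl {F : KFrame M} (m : KModel F) (w : F.W) (φ : OV M) (h : φ.boxFree) :
    ∀ (a : m.dom w), m.eval φ w a ↔
      OV.clEval (m.dom w) (fun n => {b | (b : m.D) ∈ m.I w n}) φ a := by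
  induction φ with
  | atom n => intro a; rfl
  | neg φ ih => intro a; exact not_congr (ih h a)
  | and φ ψ ih1 ih2 => intro a; exact and_congr (ih1 h.1 a) (ih2 h.2 a)
  | ex φ ih =>
    intro a
    constructor
    · rintro ⟨b, hb, hb'⟩
      exact ⟨⟨b, hb⟩, (ih h ⟨b, hb⟩).1 hb'⟩
    · rintro ⟨b, hb⟩
      exact ⟨b, b.2, (ih h b).2 hb⟩
  | box k φ ih => exact absurd h id

theorem isOVLogic_LogD (d : DSem) (C : Set (KFrame M)) : IsOVLogic (LogD d C) where
  fo := by
    rintro φ ⟨h1, h2⟩ F hF m hm w a ha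
    exact (eval_cl m w φ h1 ⟨a, ha⟩).2 (h2 _ _ _)
  kax := by
    intro k n l F hF m hm w a ha
    simp only [eval_imp, KModel.eval]
    intro h1 h2 v hv
    exact h1 v hv (h2 v hv)
  mp := by
    intro φ ψ h1 h2 F hF m hm w a ha
    exact (eval_imp m φ ψ w a).1 (h1 F hF m hm w a ha) (h2 F hF m hm w a ha)
  gen := by
    intro φ h F hF m hm w a ha
    exact (eval_all m φ w a).2 (h F hF m hm w)
  nec := by
    intro k φ h F hF m hm w a ha v hv
    exact h F hF m hm v a (m.expand k w v hv ha)
  subst := by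
    intro σ φ h F hF m hm w a ha
    exact (eval_subst m σ φ w a).2 (h F hF (substModel m σ) hm w a ha)

/-- transport of a model along an isomorphism of a frame with a reduct -/
def pullModel {F : KFrame M} {G : KFrame M'} (f : M' → M) (s : G.W ≃ F.W)
    (hs : ∀ k x y, G.R k x y ↔ F.R (f k) (s x) (s y)) (m : KModel F) : KModel G where
  D := m.D
  dom := fun x => m.dom (s x)
  domNe := fun x => m.domNe (s x)
  expand := fun k x y h => m.expand (f k) _ _ ((hs k x y).1 h)
  I := fun x => m.I (s x)

theorem eval_pull {F : KFrame M} {G : KFrame M'} (f : M' → M) (s : G.W ≃ F.W)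
    (hs : ∀ k x y, G.R k x y ↔ F.R (f k) (s x) (s y)) (m : KModel F) (φ : OV M') :
    ∀ (x : G.W) (a : m.D),
      (pullModel f s hs m).eval φ x a ↔ m.eval (OV.mapOp f φ) (s x) a := by
  induction φ with
  | atom n => intro w a; rfl
  | neg φ ih => intro w a; exact not_congr (ih w a)
  | and φ ψ ih1 ih2 => intro w a; exact and_congr (ih1 w a) (ih2 w a)
  | ex φ ih => intro w a; exact exists_congr fun b => and_congr Iff.rfl (ih w b)
  | box k φ ih =>
    intro w a
    constructor
    · intro h v hv
      obtain ⟨y, rfl⟩ := s.surjective v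
      exact (ih y a).1 (h y ((hs k w y).2 hv))
    · intro h y hy
      exact (ih y a).2 (h (s y) ((hs k w y).1 hy))

theorem mapOp_subset {F : KFrame M} {G : KFrame M'} (f : M' → M) (s : G.W ≃ F.W)
    (hs : ∀ k x y, G.R k x y ↔ F.R (f k) (s x) (s y)) (d : DSem) (C : Set (KFrame M'))
    (hG : G ∈ C) : OV.mapOp f '' LogD d C ⊆ LogD d {F} := by
  rintro _ ⟨φ, hφ, rfl⟩ F' hF' m hm w a ha
  obtain rfl : F' = F := hF'
  obtain ⟨x, rfl⟩ := s.surjective w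
  exact (eval_pull f s hs m φ x a).1 (hφ G hG (pullModel f s hs m) (fun h x => hm h (s x)) x a ha)

theorem globalConseq_sound {F : KFrame M} {L : Set (OV M)} (m : KModel F)
    (hL : ∀ χ ∈ L, m.TrueIn χ) {φ ψ : OV M} (hφ : m.TrueIn φ) (h : GlobalConseq L φ ψ) :
    m.TrueIn ψ := by
  induction h with
  | ax h => exact hL _ h
  | prem => exact hφ
  | mp _ _ h1 h2 => exact fun w a ha => (eval_imp m _ _ w a).1 (h1 w a ha) (h2 w a ha)
  | gen _ h => exact fun w a _ => (eval_all m _ w a).2 (h w)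
  | nec k _ h => exact fun w a ha v hv => h v a (m.expand k w v hv ha)

/-- one step: if `∃x Pᵢ(x)` then there is a `k`-successor with `∃x Pⱼ(x)`, and `P₂`
strictly grows towards all such successors -/
def stepF (k : M) (i j : ℕ) : OV M :=
  OV.imp (.ex (.atom i))
    (.and (.neg (.box k (.neg (.ex (.atom j)))))
      (.and (OV.imp (.atom 2) (.box k (OV.imp (.ex (.atom j)) (.atom 2))))
        (.ex (.and (.neg (.atom 2)) (.box k (OV.imp (.ex (.atom j)) (.atom 2)))))))

theorem eval_step {F : KFrame M} (m : KModel F) (k : M) (i j : ℕ) (w : F.W) (a : m.D) :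
    m.eval (stepF k i j) w a ↔ ((∃ b ∈ m.dom w, b ∈ m.I w i) →
      (∃ v, F.R k w v ∧ ∃ b ∈ m.dom v, b ∈ m.I v j) ∧
      (a ∈ m.I w 2 → ∀ v, F.R k w v → (∃ b ∈ m.dom v, b ∈ m.I v j) → a ∈ m.I v 2) ∧
      (∃ c ∈ m.dom w, c ∉ m.I w 2 ∧
        ∀ v, F.R k w v → (∃ b ∈ m.dom v, b ∈ m.I v j) → c ∈ m.I v 2)) := by
  simp only [stepF, eval_imp, KModel.eval, not_forall, not_not, exists_prop]

theorem step_grow {F : KFrame M} (m : KModel F) (k : M) (i j : ℕ)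
    (h : m.TrueIn (stepF k i j)) (w : F.W) (hw : ∃ b ∈ m.dom w, b ∈ m.I w i) :
    ∃ v, (∃ b ∈ m.dom v, b ∈ m.I v j) ∧ m.dom w ∩ m.I w 2 ⊂ m.dom v ∩ m.I v 2 := by
  have h' := fun a ha => (eval_step m k i j w a).1 (h w a ha) hw
  obtain ⟨a0, ha0⟩ := m.domNe w
  obtain ⟨⟨v, hv, hvj⟩, -, c, hc, hc2, hc3⟩ := h' a0 ha0
  refine ⟨v, hvj, ?_⟩
  have hsub := m.expand k w v hv
  rw [Set.ssubset_iff_of_subset]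
  · exact ⟨c, ⟨hsub hc, hc3 v hv hvj⟩, fun h => hc2 h.2⟩
  · rintro a ⟨ha, ha2⟩
    exact ⟨hsub ha, (h' a ha).2.1 ha2 v hv hvj⟩

theorem no_finite {F : KFrame M} (m : KModel F) (hfin : Finite F.W) (k l : M)
    (h1 : m.TrueIn (stepF k 0 1)) (h2 : m.TrueIn (stepF l 1 0)) (w : F.W)
    (hw : ∃ b ∈ m.dom w, b ∈ m.I w 0) : False := by
  let S : Set F.W := {w | (∃ b ∈ m.dom w, b ∈ m.I w 0) ∨ (∃ b ∈ m.dom w, b ∈ m.I w 1)}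
  obtain ⟨x, hx, hmax⟩ := (Set.toFinite S).exists_maximalFor (fun w => m.dom w ∩ m.I w 2) S
    ⟨w, Or.inl hw⟩
  have : ∃ v ∈ S, m.dom x ∩ m.I x 2 ⊂ m.dom v ∩ m.I v 2 := by
    rcases hx with hx | hx
    · obtain ⟨v, hv, h⟩ := step_grow m k 0 1 h1 x hx
      exact ⟨v, Or.inr hv, h⟩
    · obtain ⟨v, hv, h⟩ := step_grow m l 1 0 h2 x hx
      exact ⟨v, Or.inl hv, h⟩
  obtain ⟨v, hv, h⟩ := this
  exact h.2 (hmax hv h.1)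

open Classical in
/-- the twist -/
noncomputable def twist {A B : Type} (w1 v1 : A) (w2 v2 : B) (p : A × B × ℤ) : A × B × ℤ :=
  if p.1 = w1 ∧ p.2.1 = w2 then (v1, v2, p.2.2 - 1)
  else if p.1 = v1 ∧ p.2.1 = v2 then (w1, w2, p.2.2 + 1) else p

theorem twist_invol {A B : Type} {w1 v1 : A} {w2 v2 : B} (h1 : w1 ≠ v1) :
    Function.Involutive (twist w1 v1 w2 v2) := by
  rintro ⟨x, y, n⟩
  by_cases ha : x = w1 ∧ y = w2
  · obtain ⟨rfl, rfl⟩ := ha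
    simp [twist, h1.symm]
  · by_cases hb : x = v1 ∧ y = v2
    · obtain ⟨rfl, rfl⟩ := hb
      simp [twist, h1.symm]
    · simp [twist, ha, hb]

/-- the big frame -/
def bigFrame {M1 M2 : Type} (F1 : KFrame M1) (F2 : KFrame M2)
    (t : F1.W × F2.W × ℤ → F1.W × F2.W × ℤ) : KFrame (M1 ⊕ M2) where
  W := F1.W × F2.W × ℤ
  ne := by
    obtain ⟨a⟩ := F1.ne
    obtain ⟨b⟩ := F2.ne
    exact ⟨(a, b, 0)⟩
  R := fun k p q => match k with
    | .inl k => F1.R k p.1 q.1 ∧ p.2 = q.2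
    | .inr k => F2.R k (t p).2.1 (t q).2.1 ∧ (t p).1 = (t q).1 ∧ (t p).2.2 = (t q).2.2

open Classical in
/-- the big model -/
noncomputable def bigModel {M1 M2 : Type} (F1 : KFrame M1) (F2 : KFrame M2)
    (t : F1.W × F2.W × ℤ → F1.W × F2.W × ℤ) (w1 v1 : F1.W) (w2 : F2.W) :
    KModel (bigFrame F1 F2 t) where
  D := ℤ
  dom := fun _ => Set.univ
  domNe := fun _ => Set.univ_nonempty
  expand := fun _ _ _ _ => subset_rfl
  I := fun p k => {a | (k = 0 ∧ p.1 = w1 ∧ p.2.1 = w2) ∨ (k = 1 ∧ p.1 = v1 ∧ p.2.1 = w2) ∨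
    (k = 2 ∧ a < 2 * p.2.2 + if p.1 = w1 then 0 else 1)}

end Aux

/-- Failure of the global finite `d`-model property for
non-trivial fusions `Log_d 𝒞1 ⊗ Log_d 𝒞2`. -/
theorem fusion_not_globalFMP {M1 M2 : Type} [Finite M1] [Finite M2] (d : DSem)
    (C1 : Set (KFrame M1)) (C2 : Set (KFrame M2))
    (hdu1 : ClosedDU C1) (hdu2 : ClosedDU C2)
    (hn1 : ∃ F ∈ C1, F.Nontrivial) (hn2 : ∃ F ∈ C2, F.Nontrivial) :
    ¬ GlobalFMP d (fusion (LogD d C1) (LogD d C2)) := by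
  obtain ⟨F1, hF1, m1, w1, v1, hne1, hR1⟩ := hn1
  obtain ⟨F2, hF2, m2, w2, v2, hne2, hR2⟩ := hn2
  intro hfmp
  let t := twist w1 v1 w2 v2
  have ht : Function.Involutive t := twist_invol hne1
  let F := bigFrame F1 F2 t
  let m : KModel F := bigModel F1 F2 t w1 v1 w2
  have hG1 := hdu1 (F2.W × ℤ) ⟨(w2, 0)⟩ (fun _ => F1) (fun _ => hF1)
  have hG2 := hdu2 (F1.W × ℤ) ⟨(w1, 0)⟩ (fun _ => F2) (fun _ => hF2)
  let s1 : (Σ _ : F2.W × ℤ, F1.W) ≃ F1.W × F2.W × ℤ :=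
    ⟨fun x => (x.2, x.1), fun p => ⟨p.2, p.1⟩, fun _ => rfl, fun _ => rfl⟩
  let s2 : (Σ _ : F1.W × ℤ, F2.W) ≃ F1.W × F2.W × ℤ :=
    (⟨fun x => (x.1.1, x.2, x.1.2), fun p => ⟨(p.1, p.2.2), p.2.1⟩, fun _ => rfl,
      fun _ => rfl⟩ : (Σ _ : F1.W × ℤ, F2.W) ≃ F1.W × F2.W × ℤ).trans ht.toPerm
  have hL1 := mapOp_subset (F := F) Sum.inl s1 (by
    rintro k ⟨i, x⟩ ⟨j, y⟩
    constructor
    · rintro ⟨i', x', y', h, h1, h2⟩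
      cases h1; cases h2
      exact ⟨h, rfl⟩
    · rintro ⟨h, h'⟩
      obtain rfl : i = j := h'
      exact ⟨i, x, y, h, rfl, rfl⟩) d C1 hG1
  have hL2 := mapOp_subset (F := F) Sum.inr s2 (by
    rintro k ⟨i, x⟩ ⟨j, y⟩
    have e : ∀ (i : F1.W × ℤ) (x : F2.W), t (s2 ⟨i, x⟩) = (i.1, x, i.2) := fun i x => ht _
    change _ ↔ F2.R k (t (s2 ⟨i, x⟩)).2.1 (t (s2 ⟨j, y⟩)).2.1 ∧
      (t (s2 ⟨i, x⟩)).1 = (t (s2 ⟨j, y⟩)).1 ∧ (t (s2 ⟨i, x⟩)).2.2 = (t (s2 ⟨j, y⟩)).2.2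
    rw [e, e]
    constructor
    · rintro ⟨i', x', y', h, h1, h2⟩
      cases h1; cases h2
      exact ⟨h, rfl, rfl⟩
    · rintro ⟨h, h', h''⟩
      obtain rfl : i = j := Prod.ext h' h''
      exact ⟨i, x, y, h, rfl, rfl⟩) d C2 hG2
  have hL : ∀ χ ∈ fusion (LogD d C1) (LogD d C2), m.TrueIn χ := by
    intro χ hχ
    exact (Set.mem_sInter.1 hχ) _ ⟨isOVLogic_LogD d {F}, hL1, hL2⟩ F rfl m (fun _ _ => rfl)
  have lab0 : ∀ p : F.W, (∃ b ∈ m.dom p, b ∈ m.I p 0) ↔ p.1 = w1 ∧ p.2.1 = w2 := by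
    intro p
    constructor
    · rintro ⟨b, -, h | h | h⟩
      · exact h.2
      · exact absurd h.1 (by decide)
      · exact absurd h.1 (by decide)
    · intro h
      exact ⟨(0 : ℤ), trivial, Or.inl ⟨rfl, h⟩⟩
  have lab1 : ∀ p : F.W, (∃ b ∈ m.dom p, b ∈ m.I p 1) ↔ p.1 = v1 ∧ p.2.1 = w2 := by
    intro p
    constructor
    · rintro ⟨b, -, h | h | h⟩
      · exact absurd h.1 (by decide)
      · exact h.2
      · exact absurd h.1 (by decide)
    · intro h
      exact ⟨(0 : ℤ), trivial, Or.inr (Or.inl ⟨rfl, h⟩)⟩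
  have P0 : ∀ n a : ℤ, (show m.D from a) ∈ m.I (w1, w2, n) 2 ↔ a < 2 * n := by
    intro n a
    constructor
    · rintro (h | h | h)
      · exact absurd h.1 (by decide)
      · exact absurd h.1 (by decide)
      · simpa using h.2
    · intro h
      refine Or.inr (Or.inr ⟨rfl, ?_⟩)
      simpa using h
  have P1 : ∀ n a : ℤ, (show m.D from a) ∈ m.I (v1, w2, n) 2 ↔ a < 2 * n + 1 := by
    intro n a
    constructor
    · rintro (h | h | h)
      · exact absurd h.1 (by decide)
      · exact absurd h.1 (by decide)
      · have := h.2
        rwa [if_neg hne1.symm] at this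
    · intro h
      refine Or.inr (Or.inr ⟨rfl, ?_⟩)
      rwa [if_neg hne1.symm]
  have t0 : ∀ n, t (w1, w2, n) = (v1, v2, n - 1) := by
    intro n; simp [t, twist]
  have t1 : ∀ n, t (v1, w2, n) = (v1, w2, n) := by
    intro n; simp [t, twist, hne1.symm, hne2]
  have key1 : ∀ (n : ℤ) (v : F.W), F.R (Sum.inl m1) (w1, w2, n) v →
      (∃ b ∈ m.dom v, b ∈ m.I v 1) → v = (v1, w2, n) := by
    intro n v hv hl
    have hl' := (lab1 v).1 hl
    exact Prod.ext hl'.1 hv.2.symm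
  have key2 : ∀ (n : ℤ) (v : F.W), F.R (Sum.inr m2) (v1, w2, n) v →
      (∃ b ∈ m.dom v, b ∈ m.I v 0) → v = (w1, w2, n + 1) := by
    rintro n ⟨x', y', n'⟩ hv hl
    · obtain ⟨h1, h2⟩ := (lab0 _).1 hl
      change x' = w1 at h1
      change y' = w2 at h2
      subst h1 h2
      have h := hv.2.2
      rw [t0, t1] at h
      exact Prod.ext rfl (Prod.ext rfl (eq_add_of_sub_eq h.symm))
  have hs1 : m.TrueIn (stepF (Sum.inl m1) 0 1) := by
    intro p a _
    refine (eval_step m _ 0 1 p a).2 fun hp => ?_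
    obtain ⟨x, y, n⟩ := p
    obtain ⟨h1, h2⟩ := (lab0 _).1 hp
    change x = w1 at h1
    change y = w2 at h2
    subst h1 h2
    refine ⟨⟨(v1, y, n), ⟨hR1, rfl⟩, (lab1 _).2 ⟨rfl, rfl⟩⟩, ?_, (2 * n : ℤ), trivial, ?_, ?_⟩
    · intro ha v hv hv'
      obtain rfl := key1 n v hv hv'
      exact (P1 n a).2 (lt_trans ((P0 n a).1 ha) (lt_add_one _))
    · exact fun h => lt_irrefl _ ((P0 n _).1 h)
    · intro v hv hv'
      obtain rfl := key1 n v hv hv'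
      exact (P1 n _).2 (lt_add_one _)
  have hs2 : m.TrueIn (stepF (Sum.inr m2) 1 0) := by
    intro p a _
    refine (eval_step m _ 1 0 p a).2 fun hp => ?_
    obtain ⟨x, y, n⟩ := p
    obtain ⟨h1, h2⟩ := (lab1 _).1 hp
    change x = v1 at h1
    change y = w2 at h2
    subst h1 h2
    refine ⟨⟨(w1, y, n + 1), ?_, (lab0 _).2 ⟨rfl, rfl⟩⟩, ?_, (2 * n + 1 : ℤ), trivial, ?_, ?_⟩
    · change F2.R m2 (t (x, y, n)).2.1 (t (w1, y, n + 1)).2.1 ∧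
        (t (x, y, n)).1 = (t (w1, y, n + 1)).1 ∧ (t (x, y, n)).2.2 = (t (w1, y, n + 1)).2.2
      rw [t0, t1]
      exact ⟨hR2, rfl, by simp⟩
    · intro ha v hv hv'
      obtain rfl := key2 n v hv hv'
      have h := (P1 n a).1 ha
      exact (P0 (n + 1) a).2 (lt_trans h (by omega))
    · exact fun h => lt_irrefl _ ((P1 n _).1 h)
    · intro v hv hv'
      obtain rfl := key2 n v hv hv'
      exact (P0 (n + 1) _).2 (by omega)
  obtain ⟨F', m', -, hfin, -, hφ, w, hw⟩ := hfmp
    (.and (stepF (Sum.inl m1) 0 1) (stepF (Sum.inr m2) 1 0)) (.neg (.ex (.atom 0))) (by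
      intro hc
      have hφ : m.TrueIn (.and (stepF (Sum.inl m1) 0 1) (stepF (Sum.inr m2) 1 0)) :=
        fun w a ha => And.intro (hs1 w a ha) (hs2 w a ha)
      have := globalConseq_sound m hL hφ hc
        (w1, w2, (0 : ℤ)) (0 : ℤ) trivial
      exact this ((lab0 _).2 ⟨rfl, rfl⟩))
  refine no_finite m' hfin.1 _ _ (fun w a ha => (hφ w a ha).1) (fun w a ha => (hφ w a ha).2) w ?_
  by_contra hcon
  exact hw fun a ha => hcon


end OneVarML
end

section
/- Let L1 and L2 be propositional bimodal logics with operators □_1, □_E and □_2, □_E respectively, each containing the S5 axioms for the shared operator □_E. If L1 and L2 admit E-homogeneous models, then L1 ⊗_E L2 is Kripke complete, and if moreover L1 and L2 are decidable then L1 ⊗_E L2 is decidable. If L1 and L2 admit E-homogeneous models for global consequence, then L1 ⊗_E L2 is globally Kripke complete, and if moreover L1 and L2 are globally decidable then L1 ⊗_E L2 is globally decidable. -/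
namespace PropML

/-- propositional modal formulas over modal signature `M` -/
inductive PF (M : Type) : Type
  | atom : ℕ → PF M
  | neg : PF M → PF M
  | and : PF M → PF M → PF M
  | box : M → PF M → PF M
  deriving DecidableEq

namespace PF

variable {M M' : Type}

def imp (φ ψ : PF M) : PF M := .neg (.and φ (.neg ψ))

def or (φ ψ : PF M) : PF M := .neg (.and (.neg φ) (.neg ψ))

def dia (m : M) (φ : PF M) : PF M := .neg (.box m (.neg φ))

/-- `⊥` -/
def bot : PF M := .and (.atom 0) (.neg (.atom 0))

/-- renaming of modal operators -/
def mapOp (f : M → M') : PF M → PF M'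
  | atom n => atom n
  | neg φ => neg (mapOp f φ)
  | and φ ψ => and (mapOp f φ) (mapOp f ψ)
  | box m φ => box (f m) (mapOp f φ)

/-- uniform substitution -/
def substP (σ : ℕ → PF M) : PF M → PF M
  | atom n => σ n
  | neg φ => neg (substP σ φ)
  | and φ ψ => and (substP σ φ) (substP σ ψ)
  | box m φ => box m (substP σ φ)

end PF

/-- evaluation treating atoms and boxed formulas as atomic; used to define
the classical tautologies of the modal language -/
def tautEval {M : Type} (v : PF M → Prop) : PF M → Prop
  | .atom n => v (.atom n)
  | .neg φ => ¬ tautEval v φ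
  | .and φ ψ => tautEval v φ ∧ tautEval v ψ
  | .box m φ => v (.box m φ)

/-- classical tautologies of the propositional modal language -/
def IsTaut {M : Type} (φ : PF M) : Prop := ∀ v, tautEval v φ

/-- a (normal) propositional modal `M`-logic -/
structure IsPLogic {M : Type} (L : Set (PF M)) : Prop where
  taut : ∀ φ, IsTaut φ → φ ∈ L
  kax : ∀ (m : M) (n k : ℕ),
    PF.imp (.box m (PF.imp (.atom n) (.atom k)))
      (PF.imp (.box m (.atom n)) (.box m (.atom k))) ∈ L
  mp : ∀ φ ψ, PF.imp φ ψ ∈ L → φ ∈ L → ψ ∈ L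
  nec : ∀ m φ, φ ∈ L → PF.box m φ ∈ L
  subst : ∀ (σ : ℕ → PF M) φ, φ ∈ L → PF.substP σ φ ∈ L

/-- A Kripke `M`-frame. -/
structure KFrame (M : Type) where
  W : Type
  ne : Nonempty W
  R : M → W → W → Prop

/-- truth of a propositional formula in a Kripke model `(F, V)` -/
def PVal {M : Type} {F : KFrame M} (V : ℕ → F.W → Prop) : PF M → F.W → Prop
  | .atom n, w => V n w
  | .neg φ, w => ¬ PVal V φ w
  | .and φ ψ, w => PVal V φ w ∧ PVal V ψ w
  | .box m φ, w => ∀ v, F.R m w v → PVal V φ v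

/-- validity of a propositional formula on a frame -/
def PValid {M : Type} (F : KFrame M) (φ : PF M) : Prop :=
  ∀ (V : ℕ → F.W → Prop) (w : F.W), PVal (F := F) V φ w

/-- `F` is a frame for the logic `L` -/
def FrameFor {M : Type} (F : KFrame M) (L : Set (PF M)) : Prop :=
  ∀ φ ∈ L, PValid F φ

/-- `L` is Kripke complete -/
def KComplete {M : Type} (L : Set (PF M)) : Prop :=
  ∀ φ, (∀ F : KFrame M, FrameFor F L → PValid F φ) → φ ∈ L

/-- global consequence `φ ⊢*_L ψ`: `ψ` is in the smallest set including
`L ∪ {φ}` closed under Modus Ponens and Necessitation -/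
inductive PGlobal {M : Type} (L : Set (PF M)) (φ : PF M) : PF M → Prop
  | ax {ψ} : ψ ∈ L → PGlobal L φ ψ
  | prem : PGlobal L φ φ
  | mp {ψ χ} : PGlobal L φ (PF.imp ψ χ) → PGlobal L φ ψ → PGlobal L φ χ
  | nec (m : M) {ψ} : PGlobal L φ ψ → PGlobal L φ (PF.box m ψ)

/-- `L` is globally Kripke complete -/
def GloballyKComplete {M : Type} (L : Set (PF M)) : Prop :=
  ∀ φ ψ, PGlobal L φ ψ ↔
    ∀ F : KFrame M, FrameFor F L → ∀ V : ℕ → F.W → Prop,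
      (∀ w, PVal (F := F) V φ w) → ∀ w, PVal (F := F) V ψ w

/-- the S5 axioms for the operator `e` -/
def ContainsS5 {M : Type} (L : Set (PF M)) (e : M) : Prop :=
  PF.imp (.box e (.atom 0)) (.atom 0) ∈ L ∧
  PF.imp (.box e (.atom 0)) (.box e (.box e (.atom 0))) ∈ L ∧
  PF.imp (PF.dia e (.atom 0)) (.box e (PF.dia e (.atom 0))) ∈ L

/-- an `(E, κ)`-homogeneous model: in each `E`-equivalence class, each formula
is satisfied either nowhere or at exactly `κ` worlds -/
def EHomog {M : Type} {F : KFrame M} (e : M) (V : ℕ → F.W → Prop)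
    (κ : Cardinal) : Prop :=
  ∀ (w : F.W) (φ : PF M),
    Cardinal.mk {v : F.W // F.R e w v ∧ PVal (F := F) V φ v} = 0 ∨
    Cardinal.mk {v : F.W // F.R e w v ∧ PVal (F := F) V φ v} = κ

/-- `L` admits `E`-homogeneous models -/
def AdmitsEHomog {M : Type} (e : M) (L : Set (PF M)) : Prop :=
  ∃ κ : Cardinal, Cardinal.aleph0 ≤ κ ∧ ∀ κ', κ ≤ κ' → ∀ φ ∉ L,
    ∃ F : KFrame M, FrameFor F L ∧ ∃ V : ℕ → F.W → Prop,
      EHomog e V κ' ∧ ∃ w, ¬ PVal (F := F) V φ w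

/-- `L` admits `E`-homogeneous models for global consequence -/
def AdmitsEHomogGlobal {M : Type} (e : M) (L : Set (PF M)) : Prop :=
  ∃ κ : Cardinal, Cardinal.aleph0 ≤ κ ∧ ∀ κ', κ ≤ κ' → ∀ φ ψ, ¬ PGlobal L φ ψ →
    ∃ F : KFrame M, FrameFor F L ∧ ∃ V : ℕ → F.W → Prop,
      EHomog e V κ' ∧ (∀ w, PVal (F := F) V φ w) ∧ ∃ w, ¬ PVal (F := F) V ψ w

/-- the fusion `L1 ⊗_E L2` of two logics sharing the S5 operator `□_E`
(designated by `none` in each component signature): the smallest propositional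
modal logic in the combined language (with the single shared `□_E`) including
`L1 ∪ L2` -/
def fusionE {M1 M2 : Type} (L1 : Set (PF (Option M1))) (L2 : Set (PF (Option M2))) :
    Set (PF (Option (M1 ⊕ M2))) :=
  ⋂₀ {L | IsPLogic L ∧
    PF.mapOp (Option.map Sum.inl) '' L1 ⊆ L ∧
    PF.mapOp (Option.map Sum.inr) '' L2 ⊆ L}

/-- the propositional modal logic `S5` (of the single operator `□_E`) -/
def S5L : Set (PF Unit) := ⋂₀ {L | IsPLogic L ∧ ContainsS5 L ()}

/-- the left commutativity axiom `□□_E p → □_E □ p` -/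
def lcom {M : Type} (m : M) : PF (Option M) :=
  PF.imp (.box (some m) (.box none (.atom 0))) (.box none (.box (some m) (.atom 0)))

/-- the right commutativity axiom `□_E □ p → □ □_E p` -/
def rcom {M : Type} (m : M) : PF (Option M) :=
  PF.imp (.box none (.box (some m) (.atom 0))) (.box (some m) (.box none (.atom 0)))

/-- the semicommutator `[L, S5]^xd = L ⊗ S5 + {lcom_□ : □ ∈ M}`
(`□_E` is `none`) -/
def LS5xd {M : Type} (L : Set (PF M)) : Set (PF (Option M)) :=
  ⋂₀ {L' | IsPLogic L' ∧
    PF.mapOp Option.some '' L ⊆ L' ∧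
    PF.mapOp (fun _ => (none : Option M)) '' S5L ⊆ L' ∧
    ∀ m : M, lcom m ∈ L'}

/-- the commutator `[L, S5]^cd = [L, S5]^xd + {rcom_□ : □ ∈ M}` -/
def LS5cd {M : Type} (L : Set (PF M)) : Set (PF (Option M)) :=
  ⋂₀ {L' | IsPLogic L' ∧ LS5xd L ⊆ L' ∧ ∀ m : M, rcom m ∈ L'}

/-- the two domain semantics: expanding (`xd`) and constant (`cd`) domains -/
inductive DSem : Type
  | xd | cd
  deriving DecidableEq

/-- `[L, S5]^d` -/
def LS5 {M : Type} (d : DSem) (L : Set (PF M)) : Set (PF (Option M)) :=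
  match d with
  | .xd => LS5xd L
  | .cd => LS5cd L

/-- the fixed Gödel numbering of propositional formulas (relative to a
numbering `eM` of the modal operators) -/
def PF.encode {M : Type} (eM : M → ℕ) : PF M → ℕ
  | .atom n => Nat.pair 0 n
  | .neg φ => Nat.pair 1 (PF.encode eM φ)
  | .and φ ψ => Nat.pair 2 (Nat.pair (PF.encode eM φ) (PF.encode eM ψ))
  | .box m φ => Nat.pair 3 (Nat.pair (eM m) (PF.encode eM φ))

/-- decidability of a propositional logic w.r.t. the fixed Gödel numbering -/
def DecidableP {M : Type} (eM : M → ℕ) (L : Set (PF M)) : Prop :=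
  ComputablePred (fun n : ℕ => ∃ φ ∈ L, PF.encode eM φ = n)

/-- decidability of the global consequence relation -/
def GloballyDecidableP {M : Type} (eM : M → ℕ) (L : Set (PF M)) : Prop :=
  ComputablePred (fun p : ℕ × ℕ =>
    ∃ φ ψ, PGlobal L φ ψ ∧ PF.encode eM φ = p.1 ∧ PF.encode eM ψ = p.2)

end PropML

namespace PropML

/-- numbering of the component signature `Option Unit` (`none` is `□_E`) -/
def eOU : Option Unit → ℕ := fun o => match o with | none => 0 | some _ => 1

/-- numbering of the combined signature `Option (Unit ⊕ Unit)` -/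
def eOC : Option (Unit ⊕ Unit) → ℕ := fun o =>
  match o with | none => 0 | some (Sum.inl _) => 1 | some (Sum.inr _) => 2

open Cardinal in
/-- combinatorial gluing of two coloured sets with equivalence relations -/
theorem glue_sets {X Y P : Type} [Nonempty X] [Nonempty Y] (rX : Setoid X) (rY : Setoid Y)
    (p : X → P) (q : Y → P) (κ : Cardinal.{0})
    (hX : ∀ x c, #{x' // rX x x' ∧ p x' = c} = 0 ∨ #{x' // rX x x' ∧ p x' = c} = κ)
    (hY : ∀ y c, #{y' // rY y y' ∧ q y' = c} = 0 ∨ #{y' // rY y y' ∧ q y' = c} = κ)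
    (h12 : ∀ x, ∃ y, {c | ∃ x', rX x x' ∧ p x' = c} = {c | ∃ y', rY y y' ∧ q y' = c})
    (h21 : ∀ y, ∃ x, {c | ∃ x', rX x x' ∧ p x' = c} = {c | ∃ y', rY y y' ∧ q y' = c}) :
    ∃ (I : Type) (_ : Nonempty I) (e : X × I ≃ Y × I),
      (∀ z, q (e z).1 = p z.1) ∧
      ∀ z z', (rX z.1 z'.1 ∧ z.2 = z'.2) ↔ (rY (e z).1 (e z').1 ∧ (e z).2 = (e z').2) := by
  classical
  let sX : Quotient rX → Set P := fun c => {a | ∃ x', (Quotient.mk rX x') = c ∧ p x' = a}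
  let sY : Quotient rY → Set P := fun c => {a | ∃ x', (Quotient.mk rY x') = c ∧ q x' = a}
  have sX_mk : ∀ x, sX (Quotient.mk rX x) = {c | ∃ x', rX x x' ∧ p x' = c} := by
    intro x; ext c
    constructor
    · rintro ⟨x', h, h'⟩; exact ⟨x', rX.symm (Quotient.exact h), h'⟩
    · rintro ⟨x', h, h'⟩; exact ⟨x', Quotient.sound (rX.symm h), h'⟩
  have sY_mk : ∀ x, sY (Quotient.mk rY x) = {c | ∃ x', rY x x' ∧ q x' = c} := by
    intro x; ext c
    constructor
    · rintro ⟨x', h, h'⟩; exact ⟨x', rY.symm (Quotient.exact h), h'⟩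
    · rintro ⟨x', h, h'⟩; exact ⟨x', Quotient.sound (rY.symm h), h'⟩
  let I : Type := ℕ × X × Y
  have hI : ℵ₀ ≤ #I := by
    have : Infinite I := Prod.infinite_of_left
    exact Cardinal.aleph0_le_mk I
  obtain ⟨x0⟩ := ‹Nonempty X›
  obtain ⟨y0⟩ := ‹Nonempty Y›
  have hXI : #X ≤ #I := Cardinal.mk_le_of_injective (f := fun x => ((0, x, y0) : I))
    (fun a b h => (by simpa using congrArg (fun t : ℕ × X × Y => t.2.1) h))
  have hYI : #Y ≤ #I := Cardinal.mk_le_of_injective (f := fun y => ((0, x0, y) : I))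
    (fun a b h => (by simpa using congrArg (fun t : ℕ × X × Y => t.2.2) h))
  -- cardinality of sets of classes with given signature
  have key : ∀ (Q : Type) (s : Q → Set P) (S : Set P), #Q ≤ #I → (∃ c, s c = S) →
      #{z : Q × I // s z.1 = S} = #I := by
    rintro Q s S hQ ⟨c, hc⟩
    have e1 : {z : Q × I // s z.1 = S} ≃ {c : Q // s c = S} × I :=
      { toFun := fun z => (⟨z.1.1, z.2⟩, z.1.2)
        invFun := fun z => ⟨(z.1.1, z.2), z.1.2⟩
        left_inv := fun z => rfl
        right_inv := fun z => rfl }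
    rw [Cardinal.mk_congr e1, Cardinal.mk_prod, Cardinal.lift_id, Cardinal.lift_id]
    apply Cardinal.mul_eq_right hI
    · exact (Cardinal.mk_subtype_le _).trans hQ
    · rw [Cardinal.mk_ne_zero_iff]; exact ⟨⟨c, hc⟩⟩
  have hQX : #(Quotient rX) ≤ #I := (Cardinal.mk_quotient_le).trans hXI
  have hQY : #(Quotient rY) ≤ #I := (Cardinal.mk_quotient_le).trans hYI
  have ex : ∀ S, (∃ c, sX c = S) ↔ (∃ c, sY c = S) := by
    intro S
    constructor
    · rintro ⟨c, rfl⟩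
      obtain ⟨x, rfl⟩ := Quotient.exists_rep c
      obtain ⟨y, hy⟩ := h12 x
      exact ⟨Quotient.mk rY y, by rw [sX_mk, sY_mk, hy]⟩
    · rintro ⟨c, rfl⟩
      obtain ⟨y, rfl⟩ := Quotient.exists_rep c
      obtain ⟨x, hx⟩ := h21 y
      exact ⟨Quotient.mk rX x, by rw [sX_mk, sY_mk, hx]⟩
  have g0 : ∀ S, Nonempty ({z : Quotient rX × I // sX z.1 = S} ≃
      {z : Quotient rY × I // sY z.1 = S}) := by
    intro S
    by_cases hS : ∃ c, sX c = S
    · apply Cardinal.eq.1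
      rw [key _ _ _ hQX hS, key _ _ _ hQY ((ex S).1 hS)]
    · have hS' := fun h => hS ((ex S).2 h)
      have : IsEmpty {z : Quotient rX × I // sX z.1 = S} := ⟨fun z => hS ⟨_, z.2⟩⟩
      have : IsEmpty {z : Quotient rY × I // sY z.1 = S} := ⟨fun z => hS' ⟨_, z.2⟩⟩
      exact ⟨Equiv.equivOfIsEmpty _ _⟩
  let g : Quotient rX × I ≃ Quotient rY × I :=
    Equiv.ofFiberEquiv (f := fun z => sX z.1) (g := fun z => sY z.1) (fun S => (g0 S).some)
  have hg : ∀ z, sY (g z).1 = sX z.1 := fun z =>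
    Equiv.ofFiberEquiv_map (f := fun z : Quotient rX × I => sX z.1)
      (g := fun z : Quotient rY × I => sY z.1) (fun S => (g0 S).some) z
  let fX : X × I → (Quotient rY × I) × P := fun z => (g (Quotient.mk rX z.1, z.2), p z.1)
  let fY : Y × I → (Quotient rY × I) × P := fun z => ((Quotient.mk rY z.1, z.2), q z.1)
  have e0 : ∀ d, Nonempty ({z // fX z = d} ≃ {z // fY z = d}) := by
    rintro ⟨⟨d, j⟩, c⟩
    obtain ⟨⟨d', i⟩, hd⟩ := g.surjective (d, j)
    obtain ⟨x, rfl⟩ := Quotient.exists_rep d'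
    obtain ⟨y, rfl⟩ := Quotient.exists_rep d
    have e1 : {z // fX z = ((Quotient.mk rY y, j), c)} ≃ {x' // rX x x' ∧ p x' = c} :=
      { toFun := fun z => ⟨z.1.1, by
          have h := z.2
          simp only [fX, Prod.mk.injEq] at h
          have h2 := congrArg Prod.fst (g.injective (h.1.trans hd.symm))
          exact ⟨rX.symm (Quotient.exact h2), h.2⟩⟩
        invFun := fun z => ⟨(z.1, i), by
          have : Quotient.mk rX z.1 = Quotient.mk rX x := Quotient.sound (rX.symm z.2.1)
          simp only [fX, this, hd, z.2.2]⟩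
        left_inv := fun z => by
          have h := z.2
          simp only [fX, Prod.mk.injEq] at h
          have h2 := congrArg Prod.snd (g.injective (h.1.trans hd.symm))
          apply Subtype.ext
          exact Prod.ext rfl h2.symm
        right_inv := fun z => rfl }
    have e2 : {z // fY z = ((Quotient.mk rY y, j), c)} ≃ {x' // rY y x' ∧ q x' = c} :=
      { toFun := fun z => ⟨z.1.1, by
          have h := z.2
          simp only [fY, Prod.mk.injEq] at h
          exact ⟨rY.symm (Quotient.exact h.1.1), h.2⟩⟩
        invFun := fun z => ⟨(z.1, j), by
          have : Quotient.mk rY z.1 = Quotient.mk rY y := Quotient.sound (rY.symm z.2.1)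
          simp only [fY, this, z.2.2]⟩
        left_inv := fun z => by
          have h := z.2
          simp only [fY, Prod.mk.injEq] at h
          apply Subtype.ext
          exact Prod.ext rfl h.1.2.symm
        right_inv := fun z => rfl }
    have hs := hg (Quotient.mk rX x, i)
    rw [hd] at hs
    simp only [sX_mk, sY_mk] at hs
    have hs' : (∃ x', rX x x' ∧ p x' = c) ↔ (∃ x', rY y x' ∧ q x' = c) := by
      have := Set.ext_iff.1 hs c
      exact this.symm
    suffices h : Nonempty ({x' // rX x x' ∧ p x' = c} ≃ {x' // rY y x' ∧ q x' = c}) from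
      ⟨e1.trans (h.some.trans e2.symm)⟩
    apply Cardinal.eq.1
    by_cases hc : ∃ x', rX x x' ∧ p x' = c
    · have a1 : #{x' // rX x x' ∧ p x' = c} ≠ 0 := by
        rw [Cardinal.mk_ne_zero_iff]; exact ⟨⟨_, hc.choose_spec⟩⟩
      have a2 : #{x' // rY y x' ∧ q x' = c} ≠ 0 := by
        rw [Cardinal.mk_ne_zero_iff]; exact ⟨⟨_, (hs'.1 hc).choose_spec⟩⟩
      rw [(hX x c).resolve_left a1, (hY y c).resolve_left a2]
    · have a1 : #{x' // rX x x' ∧ p x' = c} = 0 := by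
        rw [Cardinal.mk_eq_zero_iff]; exact ⟨fun z => hc ⟨_, z.2⟩⟩
      have a2 : #{x' // rY y x' ∧ q x' = c} = 0 := by
        rw [Cardinal.mk_eq_zero_iff]; exact ⟨fun z => hc (hs'.2 ⟨_, z.2⟩)⟩
      rw [a1, a2]
  let e : X × I ≃ Y × I := Equiv.ofFiberEquiv (f := fX) (g := fY) (fun d => (e0 d).some)
  have he : ∀ z, fY (e z) = fX z := fun z => Equiv.ofFiberEquiv_map _ z
  refine ⟨I, ⟨(0, x0, y0)⟩, e, fun z => congrArg Prod.snd (he z), fun z z' => ?_⟩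
  have b1 : (rX z.1 z'.1 ∧ z.2 = z'.2) ↔ (fX z).1 = (fX z').1 := by
    simp only [fX, g.injective.eq_iff, Prod.mk.injEq, Quotient.eq]
  have b2 : (rY (e z).1 (e z').1 ∧ (e z).2 = (e z').2) ↔ (fY (e z)).1 = (fY (e z')).1 := by
    simp only [fY, Prod.mk.injEq, Quotient.eq]
  rw [b1, b2, he, he]

theorem PVal_subst {M : Type} {F : KFrame M} (V : ℕ → F.W → Prop) (σ : ℕ → PF M) (φ : PF M) :
    ∀ w, PVal (F := F) V (PF.substP σ φ) w ↔ PVal (F := F) (fun n w => PVal V (σ n) w) φ w := by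
  induction φ with
  | atom n => intro w; rfl
  | neg φ ih => intro w; simp only [PF.substP, PVal, ih]
  | and φ ψ ih1 ih2 => intro w; simp only [PF.substP, PVal, ih1, ih2]
  | box m φ ih => intro w; simp only [PF.substP, PVal, ih]

theorem PVal_taut {M : Type} {F : KFrame M} (V : ℕ → F.W → Prop) (w : F.W) (φ : PF M) :
    tautEval (fun ψ => PVal V ψ w) φ ↔ PVal V φ w := by
  induction φ with
  | atom n => rfl
  | neg φ ih => simp only [tautEval, PVal, ih]
  | and φ ψ ih1 ih2 => simp only [tautEval, PVal, ih1, ih2]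
  | box m φ ih => rfl

theorem PVal_imp {M : Type} {F : KFrame M} (V : ℕ → F.W → Prop) (w : F.W) (φ ψ : PF M) :
    PVal V (PF.imp φ ψ) w ↔ (PVal V φ w → PVal V ψ w) := by
  simp only [PF.imp, PVal]; tauto

theorem PVal_dia {M : Type} {F : KFrame M} (V : ℕ → F.W → Prop) (w : F.W) (m : M) (φ : PF M) :
    PVal V (PF.dia m φ) w ↔ ∃ v, F.R m w v ∧ PVal V φ v := by
  simp only [PF.dia, PVal]; push Not; rfl

theorem valid_isPLogic {M : Type} (F : KFrame M) : IsPLogic {φ | PValid F φ} where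
  taut := fun φ h V w => (PVal_taut V w φ).1 (h _)
  kax := by
    intro m n k V w
    simp only [PVal_imp, PVal]
    intro h1 h2 v hv
    exact h1 v hv (h2 v hv)
  mp := by
    intro φ ψ h1 h2 V w
    exact (PVal_imp V w φ ψ).1 (h1 V w) (h2 V w)
  nec := fun m φ h V w v _ => h V v
  subst := fun σ φ h V w => (PVal_subst V σ φ w).2 (h _ w)

/-- the reduct of a frame along a map of signatures -/
def KFrame.reduct {M M' : Type} (f : M → M') (F : KFrame M') : KFrame M :=
  ⟨F.W, F.ne, fun m => F.R (f m)⟩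

theorem PVal_mapOp {M M' : Type} (f : M → M') (F : KFrame M') (V : ℕ → F.W → Prop) (φ : PF M) :
    ∀ w, PVal (F := F) V (PF.mapOp f φ) w ↔ PVal (F := F.reduct f) V φ w := by
  induction φ with
  | atom n => intro w; rfl
  | neg φ ih => intro w; simp only [PF.mapOp, PVal, ih]
  | and φ ψ ih1 ih2 => intro w; simp only [PF.mapOp, PVal, ih1, ih2]
  | box m φ ih => intro w; simp only [PF.mapOp, PVal, ih]; rfl

theorem frameFor_fusion {M1 M2 : Type} (L1 : Set (PF (Option M1))) (L2 : Set (PF (Option M2)))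
    (F : KFrame (Option (M1 ⊕ M2)))
    (h1 : FrameFor (F.reduct (Option.map Sum.inl)) L1)
    (h2 : FrameFor (F.reduct (Option.map Sum.inr)) L2) : FrameFor F (fusionE L1 L2) := by
  intro φ hφ
  refine hφ {φ | PValid F φ} ⟨valid_isPLogic F, ?_, ?_⟩
  · rintro _ ⟨ψ, hψ, rfl⟩ V w
    exact (PVal_mapOp _ F V ψ w).2 (h1 ψ hψ V w)
  · rintro _ ⟨ψ, hψ, rfl⟩ V w
    exact (PVal_mapOp _ F V ψ w).2 (h2 ψ hψ V w)

theorem PVal_iso {M : Type} {F G : KFrame M} (e : F.W ≃ G.W)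
    (he : ∀ m x y, F.R m x y ↔ G.R m (e x) (e y)) (V : ℕ → F.W → Prop) (φ : PF M) :
    ∀ x, PVal (F := F) V φ x ↔ PVal (F := G) (fun n y => V n (e.symm y)) φ (e x) := by
  induction φ with
  | atom n => intro w; simp [PVal]
  | neg φ ih => intro w; simp only [PVal, ih]
  | and φ ψ ih1 ih2 => intro w; simp only [PVal, ih1, ih2]
  | box m φ ih =>
    intro w; simp only [PVal, ih]
    constructor
    · intro h v hv
      have := h (e.symm v) ((he m _ _).2 (by simpa using hv))
      simpa using this
    · intro h v hv
      exact h (e v) ((he m _ _).1 hv)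

theorem frameFor_iso {M : Type} {F G : KFrame M} (e : F.W ≃ G.W)
    (he : ∀ m x y, F.R m x y ↔ G.R m (e x) (e y)) (L : Set (PF M)) (h : FrameFor G L) :
    FrameFor F L := fun φ hφ V x => (PVal_iso e he V φ x).2 (h φ hφ _ _)

/-- `I` many disjoint copies -/
def KFrame.copies {M : Type} (F : KFrame M) (I : Type) (hI : Nonempty I) : KFrame M :=
  ⟨F.W × I, ⟨(F.ne.some, hI.some)⟩, fun m z z' => F.R m z.1 z'.1 ∧ z.2 = z'.2⟩

theorem PVal_copies {M : Type} (F : KFrame M) (I : Type) (hI : Nonempty I)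
    (V : ℕ → F.W × I → Prop) (φ : PF M) : ∀ x i,
    PVal (F := F.copies I hI) V φ (x, i) ↔ PVal (F := F) (fun n x => V n (x, i)) φ x := by
  induction φ with
  | atom n => intro x i; rfl
  | neg φ ih => intro x i; simp only [PVal, ih]
  | and φ ψ ih1 ih2 => intro x i; simp only [PVal, ih1, ih2]
  | box m φ ih =>
    intro x i; simp only [PVal]
    constructor
    · intro h v hv
      exact (ih v i).1 (h (v, i) ⟨hv, rfl⟩)
    · rintro h ⟨v, j⟩ ⟨hv, hj⟩
      obtain rfl : i = j := hj
      exact (ih v i).2 (h v hv)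

theorem frameFor_copies {M : Type} {F : KFrame M} (I : Type) (hI : Nonempty I) (L : Set (PF M))
    (h : FrameFor F L) : FrameFor (F.copies I hI) L :=
  fun φ hφ V x => (PVal_copies F I hI V φ x.1 x.2).2 (h φ hφ _ _)

inductive SigR {M J : Type} (F : J → KFrame M) (m : M) :
    (Σ j, (F j).W) → (Σ j, (F j).W) → Prop
  | mk (j : J) (x y : (F j).W) : (F j).R m x y → SigR F m ⟨j, x⟩ ⟨j, y⟩

theorem SigR_iff {M J : Type} (F : J → KFrame M) (m : M) (j : J) (x : (F j).W)
    (z : Σ j, (F j).W) : SigR F m ⟨j, x⟩ z ↔ ∃ y, (F j).R m x y ∧ z = ⟨j, y⟩ := by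
  constructor
  · intro h
    cases h with
    | mk _ _ y h => exact ⟨y, h, rfl⟩
  · rintro ⟨y, h, rfl⟩
    exact SigR.mk _ _ _ h

/-- disjoint union of frames -/
def KFrame.sum {M J : Type} [hJ : Nonempty J] (F : J → KFrame M) : KFrame M :=
  ⟨Σ j, (F j).W, ⟨⟨hJ.some, (F hJ.some).ne.some⟩⟩, SigR F⟩

theorem PVal_sum {M J : Type} [Nonempty J] (F : J → KFrame M)
    (V : ℕ → (Σ j, (F j).W) → Prop) (φ : PF M) : ∀ j (x : (F j).W),
    PVal (F := KFrame.sum F) V φ ⟨j, x⟩ ↔ PVal (F := F j) (fun n x => V n ⟨j, x⟩) φ x := by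
  induction φ with
  | atom n => intro x i; rfl
  | neg φ ih => intro x i; simp only [PVal, ih]
  | and φ ψ ih1 ih2 => intro x i; simp only [PVal, ih1, ih2]
  | box m φ ih =>
    intro j x; simp only [PVal]
    constructor
    · intro h v hv
      exact (ih j v).1 (h ⟨j, v⟩ (SigR.mk _ _ _ hv))
    · intro h v hv
      obtain ⟨y, hy, rfl⟩ := (SigR_iff F m j x v).1 hv
      exact (ih j y).2 (h y hy)

theorem frameFor_sum {M J : Type} [Nonempty J] {F : J → KFrame M} (L : Set (PF M))
    (h : ∀ j, FrameFor (F j) L) : FrameFor (KFrame.sum F) L :=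
  fun φ hφ V x => (PVal_sum F V φ x.1 x.2).2 (h x.1 φ hφ _ _)

/-- in a frame for an S5 logic the relation is an equivalence relation -/
theorem equiv_of_S5 {M : Type} {F : KFrame M} {L : Set (PF M)} {e : M} (hF : FrameFor F L)
    (hS : ContainsS5 L e) : Equivalence (F.R e) := by
  obtain ⟨h1, h2, h3⟩ := hS
  have hr : ∀ x, F.R e x x := by
    intro x
    have := hF _ h1 (fun _ y => F.R e x y) x
    simp only [PVal_imp, PVal] at this
    exact this (fun _ h => h)
  have hs : ∀ {x y}, F.R e x y → F.R e y x := by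
    intro x y hxy
    have := hF _ h3 (fun _ z => z = x) x
    simp only [PVal_imp, PVal_dia, PVal] at this
    obtain ⟨v, hv, rfl⟩ := this ⟨x, hr x, rfl⟩ y hxy
    exact hv
  refine ⟨hr, hs, ?_⟩
  intro x y z hxy hyz
  have := hF _ h2 (fun _ y => F.R e x y) x
  simp only [PVal_imp, PVal] at this
  exact this (fun _ h => h) y hxy z hyz

theorem global_sound {M : Type} {L : Set (PF M)} {φ ψ : PF M} (h : PGlobal L φ ψ)
    (F : KFrame M) (hF : FrameFor F L) (V : ℕ → F.W → Prop)
    (hφ : ∀ w, PVal (F := F) V φ w) : ∀ w, PVal (F := F) V ψ w := by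
  induction h with
  | ax h => exact hF _ h V
  | prem => exact hφ
  | mp _ _ ih1 ih2 => exact fun w => (PVal_imp V w _ _).1 (ih1 w) (ih2 w)
  | nec m _ ih => exact fun w v _ => ih v

abbrev tg (n : ℕ) : ℕ := (Nat.unpair n).1
abbrev pl (n : ℕ) : ℕ := (Nat.unpair n).2
abbrev opc (n : ℕ) : ℕ := (Nat.unpair (pl n)).1
abbrev ar (n : ℕ) : ℕ := (Nat.unpair (pl n)).2

theorem pl_lt {n : ℕ} (h : tg n ≠ 0) : pl n < n := by
  have h1 : Nat.pair (tg n) (pl n) = n := Nat.pair_unpair n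
  have h2 : pl n < Nat.pair (tg n) (pl n) := by
    generalize tg n = a at *
    generalize pl n = b at *
    unfold Nat.pair
    have : 1 ≤ a := Nat.one_le_iff_ne_zero.2 h
    split_ifs with h
    · nlinarith
    · nlinarith
  omega

theorem opc_lt {n : ℕ} (h : tg n ≠ 0) : opc n < n :=
  lt_of_le_of_lt (Nat.unpair_left_le _) (pl_lt h)

theorem ar_lt {n : ℕ} (h : tg n ≠ 0) : ar n < n :=
  lt_of_le_of_lt (Nat.unpair_right_le _) (pl_lt h)

def decOp (o : ℕ) : Option (Unit ⊕ Unit) :=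
  if o = 0 then none else if o = 1 then some (Sum.inl ()) else some (Sum.inr ())

/-- total decoding of numbers as formulas of the combined language -/
def dec (n : ℕ) : PF (Option (Unit ⊕ Unit)) :=
  if h0 : tg n = 0 then .atom (pl n)
  else if tg n = 1 then .neg (dec (pl n))
  else if tg n = 2 then .and (dec (opc n)) (dec (ar n))
  else .box (decOp (opc n)) (dec (ar n))
termination_by n
decreasing_by
  · exact pl_lt h0
  · exact opc_lt h0
  · exact ar_lt h0
  · exact ar_lt h0

theorem decOp_eOC (m : Option (Unit ⊕ Unit)) : decOp (eOC m) = m := by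
  rcases m with _ | ⟨⟨⟩⟩ | ⟨⟨⟩⟩ <;> rfl

theorem dec_encode (φ : PF (Option (Unit ⊕ Unit))) : dec (PF.encode eOC φ) = φ := by
  induction φ with
  | atom n => rw [PF.encode, dec]; simp [tg, pl, opc, ar]
  | neg φ ih => rw [PF.encode, dec]; simp [tg, pl, opc, ar, ih]
  | and φ ψ ih1 ih2 => rw [PF.encode, dec]; simp [tg, pl, opc, ar, ih1, ih2]
  | box m φ ih => rw [PF.encode, dec]; simp [tg, pl, opc, ar, ih, decOp_eOC]

theorem dec_atom {n : ℕ} (h : tg n = 0) : dec n = .atom (pl n) := by rw [dec]; simp [h]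
theorem dec_neg {n : ℕ} (h : tg n = 1) : dec n = .neg (dec (pl n)) := by rw [dec]; simp [h]
theorem dec_and {n : ℕ} (h : tg n = 2) : dec n = .and (dec (opc n)) (dec (ar n)) := by
  rw [dec]; simp [h]
theorem dec_box {n : ℕ} (h : 3 ≤ tg n) : dec n = .box (decOp (opc n)) (dec (ar n)) := by
  rw [dec, dif_neg (by omega), if_neg (by omega), if_neg (by omega)]

/-- colour of a world -/
def col {W : Type} (V : ℕ → W → Prop) (lab : W → ℕ) (x : W) : ℕ × Set ℕ :=
  (lab x, {i | i < lab x ∧ V i x})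

/-- signature of an equivalence class -/
def sig {F : KFrame (Option Unit)} (V : ℕ → F.W → Prop) (lab : F.W → ℕ) (x : F.W) :
    Set (ℕ × Set ℕ) := {c | ∃ y, F.R none x y ∧ col V lab y = c}

/-- the operator numbers belonging to a side -/
def own (s : Bool) (o : ℕ) : Prop := decide (o = 1) = s

structure PreSide (L : Set (PF (Option Unit))) (own : ℕ → Prop) (κ : Cardinal.{0})
    (D : Set (Set (ℕ × Set ℕ))) (F : KFrame (Option Unit)) (V : ℕ → F.W → Prop)
    (lab : F.W → ℕ) : Prop where
  frame : FrameFor F L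
  homog : ∀ x c, Cardinal.mk {y // F.R none x y ∧ col V lab y = c} = 0 ∨
    Cardinal.mk {y // F.R none x y ∧ col V lab y = c} = κ
  mem : ∀ x, sig V lab x ∈ D
  labE : ∀ x y, F.R none x y → lab x = lab y
  labR : ∀ x y, F.R (some ()) x y → lab x ≤ lab y + 1
  cneg : ∀ x a, a < lab x → tg a = 1 → (V a x ↔ ¬ V (pl a) x)
  cand : ∀ x a, a < lab x → tg a = 2 → (V a x ↔ V (opc a) x ∧ V (ar a) x)
  cboxE : ∀ x a, a < lab x → 3 ≤ tg a → opc a = 0 → (V a x ↔ ∀ y, F.R none x y → V (ar a) y)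
  cboxO : ∀ x a, a < lab x → 3 ≤ tg a → opc a ≠ 0 → own (opc a) →
    (V a x ↔ ∀ y, F.R (some ()) x y → V (ar a) y)

theorem sig_sum {J : Type} [Nonempty J] (F : J → KFrame (Option Unit))
    (V : ∀ j, ℕ → (F j).W → Prop) (lab : ∀ j, (F j).W → ℕ) (j : J) (x : (F j).W) :
    sig (F := KFrame.sum F) (fun n z => V z.1 n z.2) (fun z => lab z.1 z.2) ⟨j, x⟩ =
      sig (V j) (lab j) x := by
  ext c
  constructor
  · rintro ⟨z, hz, h⟩
    obtain ⟨y, hy, rfl⟩ := (SigR_iff F none j x z).1 hz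
    exact ⟨y, hy, h⟩
  · rintro ⟨y, hy, h⟩
    exact ⟨⟨j, y⟩, SigR.mk _ _ _ hy, h⟩

theorem PreSide.sum {L : Set (PF (Option Unit))} {own : ℕ → Prop} {κ : Cardinal.{0}}
    {D : Set (Set (ℕ × Set ℕ))} {J : Type} [Nonempty J] {F : J → KFrame (Option Unit)}
    {V : ∀ j, ℕ → (F j).W → Prop} {lab : ∀ j, (F j).W → ℕ}
    (h : ∀ j, PreSide L own κ D (F j) (V j) (lab j)) :
    PreSide L own κ D (KFrame.sum F) (fun n z => V z.1 n z.2) (fun z => lab z.1 z.2) := by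
  have hb : ∀ m (j : J) (x : (F j).W) (P : (Σ j, (F j).W) → Prop),
      (∀ z, (KFrame.sum F).R m ⟨j, x⟩ z → P z) ↔ ∀ y, (F j).R m x y → P ⟨j, y⟩ := by
    intro m j x P
    constructor
    · intro H y hy
      exact H _ (SigR.mk _ _ _ hy)
    · intro H z hz
      obtain ⟨y, hy, rfl⟩ := (SigR_iff F m j x z).1 hz
      exact H y hy
  refine ⟨frameFor_sum L fun j => (h j).frame, ?_, ?_, ?_, ?_, ?_, ?_, ?_, ?_⟩
  · rintro ⟨j, x⟩ c
    have e : {y : (F j).W // (F j).R none x y ∧ col (V j) (lab j) y = c} ≃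
        {z : (KFrame.sum F).W // (KFrame.sum F).R none ⟨j, x⟩ z ∧
          col (fun n (z : Σ j, (F j).W) => V z.1 n z.2) (fun z => lab z.1 z.2) z = c} := by
      refine Equiv.ofBijective (fun y => ⟨⟨j, y.1⟩, SigR.mk _ _ _ y.2.1, y.2.2⟩) ⟨?_, ?_⟩
      · intro y y' hyy
        have := congrArg Subtype.val hyy
        apply Subtype.ext
        exact eq_of_heq (Sigma.mk.inj this).2
      · rintro ⟨z, hz, hc⟩
        obtain ⟨y, hy, rfl⟩ := (SigR_iff F none j x z).1 hz
        exact ⟨⟨y, hy, hc⟩, rfl⟩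
    have := (h j).homog x c
    rw [Cardinal.mk_congr e] at this
    exact this
  · rintro ⟨j, x⟩
    rw [sig_sum]
    exact (h j).mem x
  · rintro ⟨j, x⟩
    rw [hb none j x (fun y => lab j x = lab y.1 y.2)]
    exact (h j).labE x
  · rintro ⟨j, x⟩
    rw [hb _ j x (fun y => lab j x ≤ lab y.1 y.2 + 1)]
    exact (h j).labR x
  · rintro ⟨j, x⟩
    exact (h j).cneg x
  · rintro ⟨j, x⟩
    exact (h j).cand x
  · rintro ⟨j, x⟩ a h1 h2 h3
    rw [hb _ j x (fun y => V y.1 (ar a) y.2)]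
    exact (h j).cboxE x a h1 h2 h3
  · rintro ⟨j, x⟩ a h1 h2 h3 h4
    rw [hb _ j x (fun y => V y.1 (ar a) y.2)]
    exact (h j).cboxO x a h1 h2 h3 h4

theorem glue {L1 L2 : Set (PF (Option Unit))} (hS1 : ContainsS5 L1 none)
    (hS2 : ContainsS5 L2 none) {κ : Cardinal.{0}} {D : Set (Set (ℕ × Set ℕ))}
    {F1 F2 : KFrame (Option Unit)} {V1 : ℕ → F1.W → Prop} {V2 : ℕ → F2.W → Prop}
    {lab1 : F1.W → ℕ} {lab2 : F2.W → ℕ}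
    (P1 : PreSide L1 (own true) κ D F1 V1 lab1)
    (P2 : PreSide L2 (own false) κ D F2 V2 lab2)
    (full1 : ∀ S ∈ D, ∃ x, sig V1 lab1 x = S) (full2 : ∀ S ∈ D, ∃ x, sig V2 lab2 x = S) :
    ∃ F : KFrame (Option (Unit ⊕ Unit)), FrameFor F (fusionE L1 L2) ∧
      ∃ (V : ℕ → F.W → Prop) (π : F.W → F1.W), Function.Surjective π ∧
        ∀ a x, a < lab1 (π x) → (PVal V (dec a) x ↔ V1 a (π x)) := by
  have E1 := equiv_of_S5 P1.frame hS1
  have E2 := equiv_of_S5 P2.frame hS2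
  have := F1.ne
  have := F2.ne
  obtain ⟨I, hI, e, he1, he2⟩ := glue_sets ⟨F1.R none, E1⟩ ⟨F2.R none, E2⟩
    (col V1 lab1) (col V2 lab2) κ P1.homog P2.homog
    (fun x => by
      obtain ⟨y, hy⟩ := full2 _ (P1.mem x)
      exact ⟨y, hy.symm⟩)
    (fun y => by
      obtain ⟨x, hx⟩ := full1 _ (P2.mem y)
      exact ⟨x, hx⟩)
  let F : KFrame (Option (Unit ⊕ Unit)) :=
    { W := F1.W × I
      ne := ⟨(F1.ne.some, hI.some)⟩
      R := fun m z z' => match m with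
        | none => F1.R none z.1 z'.1 ∧ z.2 = z'.2
        | some (Sum.inl _) => F1.R (some ()) z.1 z'.1 ∧ z.2 = z'.2
        | some (Sum.inr _) => F2.R (some ()) (e z).1 (e z').1 ∧ (e z).2 = (e z').2 }
  have hlab : ∀ z, lab2 (e z).1 = lab1 z.1 := fun z => congrArg Prod.fst (he1 z)
  have hV : ∀ z a, a < lab1 z.1 → (V2 a (e z).1 ↔ V1 a z.1) := by
    intro z a ha
    have h := Set.ext_iff.1 (congrArg Prod.snd (he1 z)) a
    simp only [col, Set.mem_ofPred_eq, hlab, ha, true_and] at h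
    exact h
  refine ⟨F, frameFor_fusion L1 L2 F ?_ ?_, fun n z => V1 (Nat.pair 0 n) z.1, Prod.fst, ?_, ?_⟩
  · refine frameFor_iso (F := F.reduct (Option.map Sum.inl)) (G := F1.copies I hI)
      (Equiv.refl (F1.W × I)) ?_ L1 (frameFor_copies I hI L1 P1.frame)
    rintro (_ | ⟨⟨⟩⟩) x y <;> exact Iff.rfl
  · refine frameFor_iso (F := F.reduct (Option.map Sum.inr)) (G := F2.copies I hI) e ?_ L2 (frameFor_copies I hI L2 P2.frame)
    rintro (_ | ⟨⟨⟩⟩) x y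
    · exact he2 x y
    · exact Iff.rfl
  · exact fun x => ⟨(x, hI.some), rfl⟩
  · intro a
    induction a using Nat.strong_induction_on with
    | _ a ih =>
    intro x ha
    by_cases t0 : tg a = 0
    · rw [dec_atom t0]
      have : Nat.pair 0 (pl a) = a := by
        conv_rhs => rw [← Nat.pair_unpair a]
        rw [← t0]
      simp only [PVal]
      rw [this]
    have i1 := pl_lt t0
    have i2 := opc_lt t0
    have i3 := ar_lt t0
    by_cases t1 : tg a = 1
    · rw [dec_neg t1, P1.cneg _ a ha t1, ← ih _ i1 x (by omega)]; rfl
    by_cases t2 : tg a = 2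
    · rw [dec_and t2, P1.cand _ a ha t2, ← ih _ i2 x (by omega), ← ih _ i3 x (by omega)]; rfl
    have t3 : 3 ≤ tg a := by omega
    rw [dec_box t3]
    unfold decOp
    split_ifs with o0 o1
    · rw [P1.cboxE _ a ha t3 o0]
      constructor
      · intro h y hy
        have := P1.labE _ _ hy
        exact (ih _ i3 (y, x.2) (by simp only; omega)).1 (h (y, x.2) ⟨hy, rfl⟩)
      · rintro h ⟨y, j⟩ ⟨hy, hj⟩
        have := P1.labE _ _ hy
        exact (ih _ i3 (y, j) (by simp only at *; omega)).2 (h y hy)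
    · rw [P1.cboxO _ a ha t3 o0 (by simp [own, o1])]
      constructor
      · intro h y hy
        have := P1.labR _ _ hy
        exact (ih _ i3 (y, x.2) (by simp only; omega)).1 (h (y, x.2) ⟨hy, rfl⟩)
      · rintro h ⟨y, j⟩ ⟨hy, hj⟩
        have := P1.labR _ _ hy
        exact (ih _ i3 (y, j) (by simp only at *; omega)).2 (h y hy)
    · rw [← hV x a ha, P2.cboxO _ a (by rw [hlab]; exact ha) t3 o0 (by simp [own, o1])]
      constructor
      · intro h y hy
        have h1 := P2.labR _ _ hy
        rw [hlab] at h1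
        obtain ⟨z, hz⟩ := e.surjective (y, (e x).2)
        have h2 := hlab z
        rw [hz] at h2
        simp only at h2
        have h3 : ar a < lab1 z.1 := by omega
        have h4 := hV z (ar a) h3
        rw [hz] at h4
        rw [h4, ← ih _ i3 z h3]
        exact h z ⟨by rw [hz]; exact hy, by rw [hz]⟩
      · rintro h z ⟨hy, hj⟩
        have h1 := P2.labR _ _ hy
        rw [hlab, hlab] at h1
        have h3 : ar a < lab1 z.1 := by omega
        rw [ih _ i3 z h3, ← hV z _ h3]
        exact h _ hy

section formulas
variable {M : Type}

/-- a verum built from the given atoms -/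
def tp (A : ℕ → PF M) : PF M := .neg (.and (A 0) (.neg (A 0)))
def bigAnd (t : PF M) (f : ℕ → PF M) : ℕ → PF M
  | 0 => t
  | n + 1 => .and (bigAnd t f n) (f n)
def bigOr (t : PF M) (f : ℕ → PF M) : ℕ → PF M
  | 0 => .neg t
  | n + 1 => PF.or (bigOr t f n) (f n)
def lit (b : Bool) (φ : PF M) : PF M := cond b φ (.neg φ)
def fiff (φ ψ : PF M) : PF M := .and (PF.imp φ ψ) (PF.imp ψ φ)
def typeF (A : ℕ → PF M) (T k : ℕ) : PF M :=
  bigAnd (tp A) (fun i => lit (T.testBit i) (A i)) k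
def chi (A : ℕ → PF M) (e : M) (k C : ℕ) : PF M :=
  bigAnd (tp A) (fun T => lit (C.testBit T) (PF.dia e (typeF A T k))) (2 ^ k)
def delta (A : ℕ → PF M) (e : M) (D k : ℕ) : PF M :=
  bigOr (tp A) (fun C => cond (D.testBit (Nat.pair k C)) (chi A e k C) (.neg (tp A))) (2 ^ 2 ^ k)
def coF (A : ℕ → PF M) (e o : M) (s : Bool) (a : ℕ) : PF M :=
  if tg a = 0 then tp A
  else if tg a = 1 then fiff (A a) (.neg (A (pl a)))
  else if tg a = 2 then fiff (A a) (.and (A (opc a)) (A (ar a)))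
  else if opc a = 0 then fiff (A a) (.box e (A (ar a)))
  else if decide (opc a = 1) = s then fiff (A a) (.box o (A (ar a)))
  else tp A
def defsF (A : ℕ → PF M) (e o : M) (s : Bool) (k : ℕ) : PF M :=
  bigAnd (tp A) (coF A e o s) k
def GF (A : ℕ → PF M) (e o : M) (s : Bool) (D : ℕ) : ℕ → PF M
  | 0 => tp A
  | k + 1 => .box e (.and (.and (delta A e D (k + 1)) (defsF A e o s (k + 1)))
      (.box o (GF A e o s D k)))

/-- Boolean evaluations -/
structure BHom (E : PF M → Prop) : Prop where
  neg : ∀ φ, E (.neg φ) ↔ ¬ E φ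
  and : ∀ φ ψ, E (.and φ ψ) ↔ E φ ∧ E ψ

theorem bhom_taut (v : PF M → Prop) : BHom (tautEval v) := ⟨fun _ => Iff.rfl, fun _ _ => Iff.rfl⟩
theorem bhom_PVal {F : KFrame M} (V : ℕ → F.W → Prop) (w : F.W) : BHom (fun φ => PVal V φ w) :=
  ⟨fun _ => Iff.rfl, fun _ _ => Iff.rfl⟩

variable {E : PF M → Prop} (hE : BHom E)
include hE

theorem BHom.imp (φ ψ : PF M) : E (PF.imp φ ψ) ↔ (E φ → E ψ) := by
  simp only [PF.imp, hE.neg, hE.and]; tauto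
theorem BHom.or (φ ψ : PF M) : E (PF.or φ ψ) ↔ (E φ ∨ E ψ) := by
  simp only [PF.or, hE.neg, hE.and]; tauto
theorem BHom.fiff (φ ψ : PF M) : E (fiff φ ψ) ↔ (E φ ↔ E ψ) := by
  simp only [PropML.fiff, hE.imp, hE.and]; tauto
theorem BHom.tp (A : ℕ → PF M) : E (tp A) := by
  simp only [PropML.tp, hE.neg, hE.and]; tauto
theorem BHom.lit (b : Bool) (φ : PF M) : E (lit b φ) ↔ (b = true ↔ E φ) := by
  cases b <;> simp [PropML.lit, hE.neg]
theorem BHom.bigAnd (t : PF M) (ht : E t) (f : ℕ → PF M) (n : ℕ) :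
    E (bigAnd t f n) ↔ ∀ i < n, E (f i) := by
  induction n with
  | zero => simp [PropML.bigAnd, ht]
  | succ n ih =>
    simp only [PropML.bigAnd, hE.and, ih, Nat.lt_succ_iff_lt_or_eq]
    constructor
    · rintro ⟨h1, h2⟩ i (h | rfl)
      · exact h1 i h
      · exact h2
    · exact fun h => ⟨fun i hi => h i (Or.inl hi), h n (Or.inr rfl)⟩
theorem BHom.bigOr (t : PF M) (ht : E t) (f : ℕ → PF M) (n : ℕ) :
    E (bigOr t f n) ↔ ∃ i < n, E (f i) := by
  induction n with
  | zero => simp [PropML.bigOr, ht, hE.neg]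
  | succ n ih =>
    simp only [PropML.bigOr, hE.or, ih, Nat.lt_succ_iff_lt_or_eq]
    constructor
    · rintro (⟨i, h, h'⟩ | h)
      · exact ⟨i, Or.inl h, h'⟩
      · exact ⟨n, Or.inr rfl, h⟩
    · rintro ⟨i, h | rfl, h'⟩
      · exact Or.inl ⟨i, h, h'⟩
      · exact Or.inr h'
theorem BHom.typeF (A : ℕ → PF M) (T k : ℕ) :
    E (typeF A T k) ↔ ∀ i < k, (T.testBit i = true ↔ E (A i)) := by
  simp only [PropML.typeF, hE.bigAnd _ (hE.tp A), hE.lit]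
theorem BHom.chi (A : ℕ → PF M) (e : M) (k C : ℕ) :
    E (chi A e k C) ↔ ∀ T < 2 ^ k, (C.testBit T = true ↔ E (PF.dia e (PropML.typeF A T k))) := by
  simp only [PropML.chi, hE.bigAnd _ (hE.tp A), hE.lit]
theorem BHom.delta (A : ℕ → PF M) (e : M) (D k : ℕ) :
    E (delta A e D k) ↔
      ∃ C < 2 ^ 2 ^ k, D.testBit (Nat.pair k C) = true ∧ E (PropML.chi A e k C) := by
  simp only [PropML.delta, hE.bigOr _ (hE.tp A)]
  refine exists_congr fun C => and_congr_right fun _ => ?_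
  cases D.testBit (Nat.pair k C) <;> simp [hE.neg, hE.tp A]
theorem BHom.defsF (A : ℕ → PF M) (e o : M) (s : Bool) (k : ℕ) :
    E (defsF A e o s k) ↔ ∀ i < k, E (coF A e o s i) := by
  simp only [PropML.defsF, hE.bigAnd _ (hE.tp A)]

end formulas

theorem exists_mask (P : ℕ → Prop) (n : ℕ) : ∃ T < 2 ^ n, ∀ i < n, (T.testBit i = true ↔ P i) := by
  classical
  refine ⟨Nat.ofBits (fun i : Fin n => decide (P i)), Nat.ofBits_lt_two_pow _, ?_⟩
  intro i hi
  rw [Nat.testBit_ofBits_lt _ _ hi]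
  simp

def sigOf (k C : ℕ) : Set (ℕ × Set ℕ) :=
  {c | ∃ T < 2 ^ k, C.testBit T = true ∧ c = (k, {i | i < k ∧ T.testBit i = true})}

def sigs (D : ℕ) (K : ℕ → Prop) : Set (Set (ℕ × Set ℕ)) :=
  {S | ∃ k, K k ∧ ∃ C < 2 ^ 2 ^ k, D.testBit (Nat.pair k C) = true ∧ S = sigOf k C}

section models
variable {F : KFrame (Option Unit)} {V : ℕ → F.W → Prop} {lab : F.W → ℕ}

theorem sig_eq (labE : ∀ x y, F.R none x y → lab x = lab y) (x : F.W) (C : ℕ)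
    (h : PVal V (chi .atom none (lab x) C) x) : sig V lab x = sigOf (lab x) C := by
  have h := ((bhom_PVal V x).chi _ _ _ _).1 h
  simp only [PVal_dia] at h
  have hcol : ∀ y T, F.R none x y → PVal V (typeF .atom T (lab x)) y →
      col V lab y = (lab x, {i | i < lab x ∧ T.testBit i = true}) := by
    intro y T hy hT
    have hT := ((bhom_PVal V y).typeF _ _ _).1 hT
    unfold col
    rw [← labE x y hy]
    congr 1
    ext i
    exact and_congr_right fun hi => (hT i hi).symm
  ext c
  constructor
  · rintro ⟨y, hy, rfl⟩
    obtain ⟨T, hT, hT'⟩ := exists_mask (fun i => V i y) (lab x)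
    have hty : PVal V (typeF .atom T (lab x)) y := ((bhom_PVal V y).typeF _ _ _).2 hT'
    exact ⟨T, hT, (h T hT).2 ⟨y, hy, hty⟩, hcol y T hy hty⟩
  · rintro ⟨T, hT, hC, rfl⟩
    obtain ⟨y, hy, hty⟩ := (h T hT).1 hC
    exact ⟨y, hy, hcol y T hy hty⟩

theorem homog_of {κ : Cardinal.{0}} (hV : EHomog none V κ)
    (labE : ∀ x y, F.R none x y → lab x = lab y) (x : F.W) (c : ℕ × Set ℕ) :
    Cardinal.mk {y // F.R none x y ∧ col V lab y = c} = 0 ∨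
    Cardinal.mk {y // F.R none x y ∧ col V lab y = c} = κ := by
  by_cases hc : ∃ y, F.R none x y ∧ col V lab y = c
  · obtain ⟨y0, hy0, rfl⟩ := hc
    obtain ⟨T, hT, hT'⟩ := exists_mask (fun i => V i y0) (lab x)
    have key : ∀ y, (F.R none x y ∧ col V lab y = col V lab y0) ↔
        (F.R none x y ∧ PVal V (typeF .atom T (lab x)) y) := by
      intro y
      refine and_congr_right fun hy => ?_
      have h1 : PVal V (typeF .atom T (lab x)) y ↔ _ := (bhom_PVal V y).typeF .atom T (lab x)
      rw [h1]
      unfold col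
      rw [← labE x y hy, ← labE x y0 hy0]
      simp only [Prod.mk.injEq, true_and, Set.ext_iff, Set.mem_ofPred_eq]
      constructor
      · intro h i hi
        rw [hT' i hi]
        have := h i
        simp only [hi, true_and] at this
        exact this.symm
      · intro h i
        refine and_congr_right fun hi => ?_
        have := h i hi
        rw [hT' i hi] at this
        exact this.symm
    simp only [key]
    exact hV x _
  · left
    rw [Cardinal.mk_eq_zero_iff]
    exact ⟨fun z => hc ⟨_, z.2⟩⟩

theorem mkPreSide {L : Set (PF (Option Unit))} {s : Bool} {κ : Cardinal.{0}}
    {D : Set (Set (ℕ × Set ℕ))} (hF : FrameFor F L) (hV : EHomog none V κ)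
    (labE : ∀ x y, F.R none x y → lab x = lab y)
    (labR : ∀ x y, F.R (some ()) x y → lab x ≤ lab y + 1)
    (hdef : ∀ x, ∀ a < lab x, PVal V (coF .atom none (some ()) s a) x)
    (hmem : ∀ x, ∃ C, PVal V (chi .atom none (lab x) C) x ∧ sigOf (lab x) C ∈ D) :
    PreSide L (own s) κ D F V lab where
  frame := hF
  homog := homog_of hV labE
  mem := fun x => by
    obtain ⟨C, h1, h2⟩ := hmem x
    rw [sig_eq labE x C h1]; exact h2
  labE := labE
  labR := labR
  cneg := fun x a ha t => by
    have := hdef x a ha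
    rw [coF, if_neg (by omega), if_pos t] at this
    exact ((bhom_PVal V x).fiff _ _).1 this
  cand := fun x a ha t => by
    have := hdef x a ha
    rw [coF, if_neg (by omega), if_neg (by omega), if_pos t] at this
    exact ((bhom_PVal V x).fiff _ _).1 this
  cboxE := fun x a ha t o => by
    have := hdef x a ha
    rw [coF, if_neg (by omega), if_neg (by omega), if_neg (by omega), if_pos o] at this
    exact ((bhom_PVal V x).fiff _ _).1 this
  cboxO := fun x a ha t o o' => by
    have := hdef x a ha
    rw [coF, if_neg (by omega), if_neg (by omega), if_neg (by omega), if_neg o,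
      if_pos (show decide (opc a = 1) = s from o')] at this
    exact ((bhom_PVal V x).fiff _ _).1 this

end models

def HasSide (L : Set (PF (Option Unit))) (s : Bool) (κ : Cardinal.{0})
    (D : Set (Set (ℕ × Set ℕ))) (S : Set (ℕ × Set ℕ)) : Prop :=
  ∃ (F : KFrame (Option Unit)) (V : ℕ → F.W → Prop) (lab : F.W → ℕ),
    PreSide L (own s) κ D F V lab ∧ ∃ x, sig V lab x = S

theorem full_side {L : Set (PF (Option Unit))} {s : Bool} {κ : Cardinal.{0}}
    {D : Set (Set (ℕ × Set ℕ))} (hne : D.Nonempty) (h : ∀ S ∈ D, HasSide L s κ D S) :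
    ∃ (F : KFrame (Option Unit)) (V : ℕ → F.W → Prop) (lab : F.W → ℕ),
      PreSide L (own s) κ D F V lab ∧ ∀ S ∈ D, ∃ x, sig V lab x = S := by
  choose F V lab hP x hx using fun S : D => h S.1 S.2
  have : Nonempty D := hne.to_subtype
  refine ⟨_, _, _, PreSide.sum hP, fun S hS => ⟨⟨⟨S, hS⟩, x ⟨S, hS⟩⟩, ?_⟩⟩
  rw [sig_sum, hx]

theorem glue_model {L1 L2 : Set (PF (Option Unit))} (hS1 : ContainsS5 L1 none)
    (hS2 : ContainsS5 L2 none) {κ : Cardinal.{0}} {D : Set (Set (ℕ × Set ℕ))} (hne : D.Nonempty)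
    (H1 : ∀ S ∈ D, HasSide L1 true κ D S) (H2 : ∀ S ∈ D, HasSide L2 false κ D S) :
    ∃ F : KFrame (Option (Unit ⊕ Unit)), FrameFor F (fusionE L1 L2) ∧
      ∃ (V : ℕ → F.W → Prop),
        (∀ S ∈ D, ∀ c ∈ S, ∃ x, ∀ a < c.1, (PVal V (dec a) x ↔ a ∈ c.2)) ∧
        (∀ x, ∃ S ∈ D, ∃ c ∈ S, ∀ a < c.1, (PVal V (dec a) x ↔ a ∈ c.2)) := by
  obtain ⟨F1, V1, lab1, P1, f1⟩ := full_side hne H1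
  obtain ⟨F2, V2, lab2, P2, f2⟩ := full_side hne H2
  obtain ⟨F, hF, V, π, hπ, h⟩ := glue hS1 hS2 P1 P2 f1 f2
  have key : ∀ x, ∀ a < (col V1 lab1 (π x)).1,
      (PVal V (dec a) x ↔ a ∈ (col V1 lab1 (π x)).2) := by
    intro x a ha
    rw [h a x ha]
    exact ⟨fun h => ⟨ha, h⟩, fun h => h.2⟩
  refine ⟨F, hF, V, ?_, ?_⟩
  · intro S hS c hc
    obtain ⟨x, rfl⟩ := f1 S hS
    obtain ⟨y, hy, rfl⟩ := hc
    obtain ⟨z, rfl⟩ := hπ y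
    exact ⟨z, key z⟩
  · intro x
    exact ⟨_, P1.mem (π x), _, ⟨π x, (equiv_of_S5 P1.frame hS1).refl _, rfl⟩, key x⟩

def LocalGood (s : Bool) (L : Set (PF (Option Unit))) (D n : ℕ) : Prop :=
  ∀ k < n + 1, ∀ C < 2 ^ 2 ^ k, D.testBit (Nat.pair k C) = true →
    ¬ (PF.neg (.and (chi .atom none k C) (GF .atom none (some ()) s D k)) ∈ L)

def GlobalGood (s : Bool) (L : Set (PF (Option Unit))) (D n : ℕ) : Prop :=
  ∀ C < 2 ^ 2 ^ n, D.testBit (Nat.pair n C) = true →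
    ¬ PGlobal L (.and (delta .atom none D n) (defsF .atom none (some ()) s n))
      (.neg (chi .atom none n C))

theorem local_side {L : Set (PF (Option Unit))} {s : Bool} {κ : Cardinal.{0}} {D n : ℕ}
    (hS : ContainsS5 L none)
    (hκ : ∀ φ ∉ L, ∃ F : KFrame (Option Unit), FrameFor F L ∧ ∃ V : ℕ → F.W → Prop,
      EHomog none V κ ∧ ∃ w, ¬ PVal (F := F) V φ w)
    (hD0 : D.testBit (Nat.pair 0 1) = true)
    (hg : LocalGood s L D n) : ∀ S ∈ sigs D (· < n + 1), HasSide L s κ (sigs D (· < n + 1)) S := by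
  classical
  rintro S ⟨k, hk, C, hC, hDC, rfl⟩
  obtain ⟨F, hF, V, hV, w, hw⟩ := hκ _ (hg k hk C hC hDC)
  have hE := equiv_of_S5 hF hS
  have hw : PVal V (chi .atom none k C) w ∧ PVal V (GF .atom none (some ()) s D k) w := by
    simpa only [PVal, not_not] using hw
  have hG0 : ∀ x, PVal V (GF .atom none (some ()) s D 0) x := fun x => (bhom_PVal V x).tp _
  have hGE : ∀ j x y, F.R none x y → PVal V (GF .atom none (some ()) s D j) x →
      PVal V (GF .atom none (some ()) s D j) y := by
    intro j x y hxy h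
    cases j with
    | zero => exact hG0 y
    | succ j => exact fun z hz => h z (hE.trans hxy hz)
  let lab : F.W → ℕ := fun x =>
    Nat.findGreatest (fun j => PVal V (GF .atom none (some ()) s D j) x) k
  have hlabG : ∀ x, PVal V (GF .atom none (some ()) s D (lab x)) x := fun x =>
    Nat.findGreatest_spec (P := fun j => PVal V (GF .atom none (some ()) s D j) x)
      (Nat.zero_le k) (hG0 x)
  have hlabk : ∀ x, lab x ≤ k := fun x => Nat.findGreatest_le k
  have hlab_le : ∀ x j, j ≤ k → PVal V (GF .atom none (some ()) s D j) x → j ≤ lab x :=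
    fun x j hj h => Nat.le_findGreatest hj h
  have hlab1 : ∀ x j, lab x = j + 1 → PVal V (delta .atom none D (j + 1)) x ∧
      PVal V (defsF .atom none (some ()) s (j + 1)) x ∧
      ∀ y, F.R (some ()) x y → PVal V (GF .atom none (some ()) s D j) y := by
    intro x j hj
    have h := hlabG x
    rw [hj] at h
    obtain ⟨⟨h1, h2⟩, h3⟩ := h x (hE.refl x)
    exact ⟨h1, h2, h3⟩
  have labE : ∀ x y, F.R none x y → lab x = lab y := by
    intro x y hxy
    apply le_antisymm
    · exact hlab_le y _ (hlabk x) (hGE _ x y hxy (hlabG x))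
    · exact hlab_le x _ (hlabk y) (hGE _ y x (hE.symm hxy) (hlabG y))
  have hlabw : lab w = k := le_antisymm (hlabk w) (hlab_le w k le_rfl hw.2)
  refine ⟨F, V, lab, mkPreSide hF hV labE ?_ ?_ ?_, w, ?_⟩
  · intro x y hxy
    rcases hx : lab x with _ | j
    · omega
    · have := hlab_le y j (by have := hlabk x; omega) ((hlab1 x j hx).2.2 y hxy)
      omega
  · intro x a ha
    rcases hx : lab x with _ | j
    · omega
    · exact ((bhom_PVal V x).defsF _ _ _ _ _).1 (hlab1 x j hx).2.1 a (by omega)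
  · intro x
    have hxk := hlabk x
    rcases hx : lab x with _ | j
    · refine ⟨1, ?_, 0, by omega, 1, by norm_num, hD0, rfl⟩
      refine ((bhom_PVal V x).chi _ _ _ _).2 ?_
      intro T hT
      obtain rfl : T = 0 := by simpa using hT
      simp only [PVal_dia]
      refine ⟨fun _ => ⟨x, hE.refl x, ?_⟩, fun _ => by decide⟩
      exact (bhom_PVal V x).tp _
    · obtain ⟨C', h1, h2, h3⟩ := ((bhom_PVal V x).delta _ _ _ _).1 (hlab1 x j hx).1
      exact ⟨C', h3, j + 1, by omega, C', h1, h2, rfl⟩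
  · have := sig_eq labE w C (by rw [hlabw]; exact hw.1)
    rw [this, hlabw]

theorem global_side {L : Set (PF (Option Unit))} {s : Bool} {κ : Cardinal.{0}} {D n : ℕ}
    (hκ : ∀ φ ψ, ¬ PGlobal L φ ψ →
      ∃ F : KFrame (Option Unit), FrameFor F L ∧ ∃ V : ℕ → F.W → Prop,
      EHomog none V κ ∧ (∀ w, PVal (F := F) V φ w) ∧ ∃ w, ¬ PVal (F := F) V ψ w)
    (hg : GlobalGood s L D n) : ∀ S ∈ sigs D (· = n), HasSide L s κ (sigs D (· = n)) S := by
  rintro S ⟨k, rfl, C, hC, hDC, rfl⟩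
  obtain ⟨F, hF, V, hV, hφ, w, hw⟩ := hκ _ _ (hg C hC hDC)
  have hw : PVal V (chi .atom none k C) w := by
    simpa only [PVal, not_not] using hw
  refine ⟨F, V, fun _ => k, mkPreSide hF hV (fun _ _ _ => rfl) ?_ ?_ ?_, w, ?_⟩
  · intro x y _; omega
  · intro x a ha
    exact ((bhom_PVal V x).defsF _ _ _ _ _).1 (hφ x).2 a ha
  · intro x
    obtain ⟨C', h1, h2, h3⟩ := ((bhom_PVal V x).delta _ _ _ _).1 (hφ x).1
    exact ⟨C', h3, k, rfl, C', h1, h2, rfl⟩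
  · exact sig_eq (lab := fun _ => k) (fun _ _ _ => rfl) w C hw

section transport
variable {M M' : Type} (f : M → M') (A : ℕ → PF M')

def tr (φ : PF M) : PF M' := PF.substP A (PF.mapOp f φ)

theorem tr_neg (φ : PF M) : tr f A (.neg φ) = .neg (tr f A φ) := rfl
theorem tr_and (φ ψ : PF M) : tr f A (.and φ ψ) = .and (tr f A φ) (tr f A ψ) := rfl
theorem tr_box (m : M) (φ : PF M) : tr f A (.box m φ) = .box (f m) (tr f A φ) := rfl
theorem tr_atom (n : ℕ) : tr f A (.atom n) = A n := rfl
theorem tr_imp (φ ψ : PF M) : tr f A (PF.imp φ ψ) = PF.imp (tr f A φ) (tr f A ψ) := rfl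
theorem tr_dia (m : M) (φ : PF M) : tr f A (PF.dia m φ) = PF.dia (f m) (tr f A φ) := rfl
theorem tr_fiff (φ ψ : PF M) : tr f A (fiff φ ψ) = fiff (tr f A φ) (tr f A ψ) := rfl
theorem tr_tp : tr f A (tp .atom) = tp A := rfl
theorem tr_bigAnd (t : PF M) (g : ℕ → PF M) (n : ℕ) :
    tr f A (bigAnd t g n) = bigAnd (tr f A t) (fun i => tr f A (g i)) n := by
  induction n with
  | zero => rfl
  | succ n ih => rw [bigAnd, tr_and, ih]; rfl
theorem tr_bigOr (t : PF M) (g : ℕ → PF M) (n : ℕ) :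
    tr f A (bigOr t g n) = bigOr (tr f A t) (fun i => tr f A (g i)) n := by
  induction n with
  | zero => rfl
  | succ n ih =>
    rw [bigOr, bigOr, ← ih]; rfl
theorem tr_lit (b : Bool) (φ : PF M) : tr f A (lit b φ) = lit b (tr f A φ) := by
  cases b <;> rfl
theorem tr_typeF (T k : ℕ) : tr f A (typeF .atom T k) = typeF A T k := by
  simp only [typeF, tr_bigAnd, tr_lit, tr_atom, tr_tp]
theorem tr_chi (e : M) (k C : ℕ) : tr f A (chi .atom e k C) = chi A (f e) k C := by
  simp only [chi, tr_bigAnd, tr_lit, tr_dia, tr_typeF, tr_tp]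
theorem tr_delta (e : M) (D k : ℕ) : tr f A (delta .atom e D k) = delta A (f e) D k := by
  simp only [delta, tr_bigOr, tr_tp]
  congr 1
  funext C
  cases D.testBit (Nat.pair k C)
  · rfl
  · exact tr_chi f A e k C
theorem tr_coF (e o : M) (s : Bool) (a : ℕ) :
    tr f A (coF .atom e o s a) = coF A (f e) (f o) s a := by
  unfold coF
  split_ifs <;> rfl
theorem tr_defsF (e o : M) (s : Bool) (k : ℕ) :
    tr f A (defsF .atom e o s k) = defsF A (f e) (f o) s k := by
  simp only [defsF, tr_bigAnd, tr_tp, tr_coF]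
theorem tr_GF (e o : M) (s : Bool) (D k : ℕ) :
    tr f A (GF .atom e o s D k) = GF A (f e) (f o) s D k := by
  induction k with
  | zero => rfl
  | succ k ih => simp only [GF, tr_box, tr_and, tr_delta, tr_defsF, ih]

end transport

structure IsTh {M : Type} (Th : Set (PF M)) (e : M) : Prop where
  taut : ∀ φ, IsTaut φ → φ ∈ Th
  mp : ∀ φ ψ, PF.imp φ ψ ∈ Th → φ ∈ Th → ψ ∈ Th
  nec : ∀ m φ, φ ∈ Th → PF.box m φ ∈ Th
  tax : ∀ φ, PF.imp (.box e φ) φ ∈ Th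

section th
variable {M : Type} {Th : Set (PF M)} {e : M}

theorem IsTh.one (h : IsTh Th e) {φ ψ : PF M} (hφ : φ ∈ Th)
    (H : ∀ v, tautEval v φ → tautEval v ψ) : ψ ∈ Th :=
  h.mp φ ψ (h.taut _ fun v => ((bhom_taut v).imp _ _).2 (H v)) hφ

theorem IsTh.two (h : IsTh Th e) {φ ψ χ : PF M} (hφ : φ ∈ Th) (hψ : ψ ∈ Th)
    (H : ∀ v, tautEval v φ → tautEval v ψ → tautEval v χ) : χ ∈ Th := by
  refine h.mp ψ χ (h.one hφ fun v h1 => ((bhom_taut v).imp _ _).2 (H v h1)) hψ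

theorem IsTh.and (h : IsTh Th e) {φ ψ : PF M} (hφ : φ ∈ Th) (hψ : ψ ∈ Th) : .and φ ψ ∈ Th :=
  h.two hφ hψ fun _ h1 h2 => ⟨h1, h2⟩

theorem IsTh.tp (h : IsTh Th e) (A : ℕ → PF M) : tp A ∈ Th :=
  h.taut _ fun v => (bhom_taut v).tp A

theorem IsTh.bigAnd (h : IsTh Th e) (A : ℕ → PF M) (f : ℕ → PF M) (n : ℕ)
    (H : ∀ i < n, f i ∈ Th) : bigAnd (PropML.tp A) f n ∈ Th := by
  induction n with
  | zero => exact h.tp A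
  | succ n ih => exact h.and (ih fun i hi => H i (by omega)) (H n (by omega))

variable {A : ℕ → PF M}

theorem IsTh.delta (h : IsTh Th e) {D k : ℕ}
    (hD : ∀ C < 2 ^ 2 ^ k, ¬ D.testBit (Nat.pair k C) = true → .neg (chi A e k C) ∈ Th) :
    delta A e D k ∈ Th := by
  have h1 := h.bigAnd A (fun C => cond (D.testBit (Nat.pair k C)) (PropML.tp A)
    (.neg (chi A e k C))) (2 ^ 2 ^ k) (by
      intro C hC
      have := hD C hC
      cases hb : D.testBit (Nat.pair k C) with
      | true => exact h.tp A
      | false => exact this (by simp [hb]))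
  refine h.one h1 fun v hv => ?_
  have hv := ((bhom_taut v).bigAnd _ ((bhom_taut v).tp A) _ _).1 hv
  obtain ⟨C, hC, hC'⟩ := exists_mask (fun T => tautEval v (PF.dia e (typeF A T k))) (2 ^ k)
  have hchi : tautEval v (chi A e k C) := ((bhom_taut v).chi _ _ _ _).2 hC'
  refine ((bhom_taut v).delta _ _ _ _).2 ⟨C, hC, ?_, hchi⟩
  have := hv C hC
  cases hb : D.testBit (Nat.pair k C) with
  | true => rfl
  | false => simp only [hb] at this; exact absurd hchi this

theorem IsTh.find (h : IsTh Th e) {D n N : ℕ} (hN : N < n) (hd : PropML.delta A e D n ∈ Th)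
    (hA : A N ∉ Th) : ∃ C < 2 ^ 2 ^ n, D.testBit (Nat.pair n C) = true ∧
      ∃ T < 2 ^ n, C.testBit T = true ∧ ¬ T.testBit N = true := by
  by_contra hcon
  push Not at hcon
  apply hA
  have h1 := h.bigAnd A (fun T => PF.imp (.box e (.neg (typeF A T n))) (.neg (typeF A T n)))
    (2 ^ n) (fun T _ => h.tax _)
  refine h.two h1 hd fun v h1 h2 => ?_
  have h1 := ((bhom_taut v).bigAnd _ ((bhom_taut v).tp A) _ _).1 h1
  obtain ⟨C, hC, hb, h2⟩ := ((bhom_taut v).delta _ _ _ _).1 h2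
  have h2 := ((bhom_taut v).chi _ _ _ _).1 h2
  obtain ⟨T, hT, hT'⟩ := exists_mask (fun i => tautEval v (A i)) n
  have ht : tautEval v (typeF A T n) := ((bhom_taut v).typeF _ _ _).2 hT'
  have h3 := ((bhom_taut v).imp _ _).1 (h1 T hT)
  have h4 : tautEval v (PF.dia e (typeF A T n)) := fun h5 => h3 h5 ht
  exact (hT' N hN).1 (hcon C hC hb T hT ((h2 T hT).2 h4))

theorem IsTh.all (h : IsTh Th e) {n N C T : ℕ} (hN : N < n) (hA : A N ∈ Th)
    (hC : .neg (chi A e n C) ∉ Th) (hT : T < 2 ^ n) (hCT : C.testBit T = true) :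
    T.testBit N = true := by
  by_contra hcon
  apply hC
  have h1 : .neg (typeF A T n) ∈ Th := h.one hA fun v hv ht =>
    hcon ((((bhom_taut v).typeF _ _ _).1 ht N hN).2 hv)
  refine h.one (h.nec e _ h1) fun v hv hc => ?_
  exact (((bhom_taut v).chi _ _ _ _).1 hc T hT).1 hCT hv

end th

def fS (s : Bool) : Option Unit → Option (Unit ⊕ Unit) :=
  Option.map (fun u => cond s (Sum.inl u) (Sum.inr u))

theorem coF_mem {Th : Set (PF (Option (Unit ⊕ Unit)))} (h : IsTh Th none) (s : Bool) (a : ℕ) :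
    coF dec none (fS s (some ())) s a ∈ Th := by
  unfold coF
  have key : ∀ φ ψ : PF (Option (Unit ⊕ Unit)), φ = ψ → fiff φ ψ ∈ Th := by
    rintro φ _ rfl
    exact h.taut _ fun v => ((bhom_taut v).fiff _ _).2 Iff.rfl
  split_ifs with h0 h1 h2 h3 h4
  · exact h.tp _
  · exact key _ _ (dec_neg h1)
  · exact key _ _ (dec_and h2)
  · apply key
    rw [dec_box (by omega), h3]; rfl
  · apply key
    rw [dec_box (by omega)]
    congr 1
    cases s
    · simp only [decide_eq_false_iff_not] at h4
      simp [decOp, h3, h4, fS]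
    · simp only [decide_eq_true_eq] at h4
      simp [decOp, h4, fS]
  · exact h.tp _

theorem defsF_mem {Th : Set (PF (Option (Unit ⊕ Unit)))} (h : IsTh Th none) (s : Bool) (k : ℕ) :
    defsF dec none (fS s (some ())) s k ∈ Th := h.bigAnd _ _ _ fun i _ => coF_mem h s i

def bnd (n : ℕ) : ℕ := Nat.pair n (2 ^ 2 ^ n) + 1

theorem pair_lt_bnd {k n C : ℕ} (hk : k < n + 1) (hC : C < 2 ^ 2 ^ k) : Nat.pair k C < bnd n := by
  have h1 : C < 2 ^ 2 ^ n :=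
    lt_of_lt_of_le hC (Nat.pow_le_pow_right (by norm_num)
      (Nat.pow_le_pow_right (by norm_num) (by omega)))
  have h2 := Nat.pair_lt_pair_right k h1
  rcases Nat.lt_or_eq_of_le (show k ≤ n by omega) with h | rfl
  · have := Nat.pair_lt_pair_left (2 ^ 2 ^ n) h
    unfold bnd; omega
  · unfold bnd; omega

/-- canonical `D` -/
theorem exists_D (Th : Set (PF (Option (Unit ⊕ Unit)))) (n : ℕ) :
    ∃ D < 2 ^ bnd n, ∀ k < n + 1, ∀ C < 2 ^ 2 ^ k,
      (D.testBit (Nat.pair k C) = true ↔ .neg (chi dec none k C) ∉ Th) := by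
  obtain ⟨D, h1, h2⟩ := exists_mask
    (fun m => .neg (chi dec none m.unpair.1 m.unpair.2) ∉ Th) (bnd n)
  refine ⟨D, h1, fun k hk C hC => ?_⟩
  rw [h2 _ (pair_lt_bnd hk hC), Nat.unpair_pair]

section canon
variable {Th : Set (PF (Option (Unit ⊕ Unit)))} {D n : ℕ}

theorem canon_delta (h : IsTh Th none) (hD : ∀ k < n + 1, ∀ C < 2 ^ 2 ^ k,
      (D.testBit (Nat.pair k C) = true ↔ .neg (chi dec none k C) ∉ Th)) {k : ℕ} (hk : k < n + 1) :
    delta dec none D k ∈ Th := by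
  refine h.delta fun C hC hb => ?_
  rw [hD k hk C hC, not_not] at hb
  exact hb

theorem canon_GF (h : IsTh Th none) (hD : ∀ k < n + 1, ∀ C < 2 ^ 2 ^ k,
      (D.testBit (Nat.pair k C) = true ↔ .neg (chi dec none k C) ∉ Th)) (s : Bool) {k : ℕ}
    (hk : k < n + 1) : GF dec none (fS s (some ())) s D k ∈ Th := by
  induction k with
  | zero => exact h.tp _
  | succ k ih =>
    exact h.nec _ _ (h.and (h.and (canon_delta h hD hk) (defsF_mem h s _))
      (h.nec _ _ (ih (by omega))))

theorem canon_local (h : IsTh Th none) (hD : ∀ k < n + 1, ∀ C < 2 ^ 2 ^ k,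
      (D.testBit (Nat.pair k C) = true ↔ .neg (chi dec none k C) ∉ Th)) (s : Bool)
    {L : Set (PF (Option Unit))} (hL : ∀ φ ∈ L, tr (fS s) dec φ ∈ Th) : LocalGood s L D n := by
  intro k hk C hC hb hmem
  apply (hD k hk C hC).1 hb
  have h1 := hL _ hmem
  rw [tr_neg, tr_and, tr_chi, tr_GF] at h1
  exact h.two h1 (canon_GF h hD s hk) fun v h1 h2 h3 => h1 ⟨h3, h2⟩

theorem canon_global (h : IsTh Th none) (hD : ∀ k < n + 1, ∀ C < 2 ^ 2 ^ k,
      (D.testBit (Nat.pair k C) = true ↔ .neg (chi dec none k C) ∉ Th)) (s : Bool)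
    {L : Set (PF (Option Unit))} (hL : ∀ φ ∈ L, tr (fS s) dec φ ∈ Th) : GlobalGood s L D n := by
  intro C hC hb hmem
  apply (hD n (by omega) C hC).1 hb
  have h1 : ∀ ψ, PGlobal L (.and (delta .atom none D n) (defsF .atom none (some ()) s n)) ψ →
      tr (fS s) dec ψ ∈ Th := by
    intro ψ hψ
    induction hψ with
    | ax h => exact hL _ h
    | prem =>
      rw [tr_and, tr_delta, tr_defsF]
      exact h.and (canon_delta h hD (by omega)) (defsF_mem h s n)
    | mp _ _ ih1 ih2 => rw [tr_imp] at ih1; exact h.mp _ _ ih1 ih2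
    | nec m _ ih => exact h.nec _ _ ih
  have h2 := h1 _ hmem
  rw [tr_neg, tr_chi] at h2
  exact h2

theorem canon_zero (h : IsTh Th none) (hD : ∀ k < n + 1, ∀ C < 2 ^ 2 ^ k,
      (D.testBit (Nat.pair k C) = true ↔ .neg (chi dec none k C) ∉ Th)) {φ} (hφ : φ ∉ Th) :
    D.testBit (Nat.pair 0 1) = true := by
  rw [hD 0 (by omega) 1 (by norm_num)]
  intro hc
  apply hφ
  refine h.two hc (h.tax (.neg (typeF dec 0 0))) fun v h1 h2 => ?_
  exfalso
  apply h1
  refine ((bhom_taut v).chi _ _ _ _).2 ?_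
  intro T hT
  obtain rfl : T = 0 := by simpa using hT
  refine iff_of_true (by decide) fun h3 => ?_
  exact ((bhom_taut v).imp _ _).1 h2 h3 ((bhom_taut v).tp _)

end canon

theorem fusion_isPLogic {M1 M2 : Type} (L1 : Set (PF (Option M1))) (L2 : Set (PF (Option M2))) :
    IsPLogic (fusionE L1 L2) where
  taut := fun φ h L hL => hL.1.taut φ h
  kax := fun m n k L hL => hL.1.kax m n k
  mp := fun φ ψ h1 h2 L hL => hL.1.mp φ ψ (h1 L hL) (h2 L hL)
  nec := fun m φ h L hL => hL.1.nec m φ (h L hL)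
  subst := fun σ φ h L hL => hL.1.subst σ φ (h L hL)

section fus
variable (L1 L2 : Set (PF (Option Unit)))

theorem fus_left : ∀ φ ∈ L1, tr (fS true) dec φ ∈ fusionE L1 L2 := fun φ hφ =>
  (fusion_isPLogic L1 L2).subst dec _ (fun _ hL => hL.2.1 ⟨φ, hφ, rfl⟩)
theorem fus_right : ∀ φ ∈ L2, tr (fS false) dec φ ∈ fusionE L1 L2 := fun φ hφ =>
  (fusion_isPLogic L1 L2).subst dec _ (fun _ hL => hL.2.2 ⟨φ, hφ, rfl⟩)

variable {L1 L2}
theorem fus_tax (hS1 : ContainsS5 L1 none) (φ : PF (Option (Unit ⊕ Unit))) :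
    PF.imp (.box none φ) φ ∈ fusionE L1 L2 :=
  (fusion_isPLogic L1 L2).subst (fun _ => φ) _ (fun _ hL => hL.2.1 ⟨_, hS1.1, rfl⟩)

theorem fus_th (hS1 : ContainsS5 L1 none) : IsTh (fusionE L1 L2) none :=
  ⟨(fusion_isPLogic L1 L2).taut, (fusion_isPLogic L1 L2).mp, (fusion_isPLogic L1 L2).nec,
    fus_tax hS1⟩

theorem glob_th (hS1 : ContainsS5 L1 none) (φ : PF (Option (Unit ⊕ Unit))) :
    IsTh {ψ | PGlobal (fusionE L1 L2) φ ψ} none :=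
  ⟨fun ψ h => .ax ((fusion_isPLogic L1 L2).taut ψ h), fun _ _ h1 h2 => .mp h1 h2,
    fun m _ h => .nec m h, fun ψ => .ax (fus_tax hS1 ψ)⟩

/-- the local criterion -/
def LocalCrit (L1 L2 : Set (PF (Option Unit))) (N D : ℕ) : Prop :=
  D.testBit (Nat.pair 0 1) = true ∧ LocalGood true L1 D (N + 1) ∧ LocalGood false L2 D (N + 1) ∧
    ∃ C < 2 ^ 2 ^ (N + 1), D.testBit (Nat.pair (N + 1) C) = true ∧
      ∃ T < 2 ^ (N + 1), C.testBit T = true ∧ ¬ T.testBit N = true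

def GlobalCrit (L1 L2 : Set (PF (Option Unit))) (N1 N2 n D : ℕ) : Prop :=
  GlobalGood true L1 D n ∧ GlobalGood false L2 D n ∧
    (∀ C < 2 ^ 2 ^ n, D.testBit (Nat.pair n C) = true →
      ∀ T < 2 ^ n, C.testBit T = true → T.testBit N1 = true) ∧
    ∃ C < 2 ^ 2 ^ n, D.testBit (Nat.pair n C) = true ∧
      ∃ T < 2 ^ n, C.testBit T = true ∧ ¬ T.testBit N2 = true

theorem local_crit_of (hS1 : ContainsS5 L1 none) {N : ℕ} (h : dec N ∉ fusionE L1 L2) :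
    ∃ D < 2 ^ bnd (N + 1), LocalCrit L1 L2 N D := by
  have hT := fus_th (L2 := L2) hS1
  obtain ⟨D, h1, hD⟩ := exists_D (fusionE L1 L2) (N + 1)
  exact ⟨D, h1, canon_zero hT hD h, canon_local hT hD true (fus_left L1 L2),
    canon_local hT hD false (fus_right L1 L2),
    hT.find (by omega) (canon_delta hT hD (by omega)) h⟩

theorem global_crit_of (hS1 : ContainsS5 L1 none) {N1 N2 n : ℕ} (hn1 : N1 < n) (hn2 : N2 < n)
    (h : ¬ PGlobal (fusionE L1 L2) (dec N1) (dec N2)) :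
    ∃ D < 2 ^ bnd n, GlobalCrit L1 L2 N1 N2 n D := by
  have hT := glob_th (L2 := L2) hS1 (dec N1)
  obtain ⟨D, h1, hD⟩ := exists_D {ψ | PGlobal (fusionE L1 L2) (dec N1) ψ} n
  refine ⟨D, h1, canon_global hT hD true (fun φ hφ => .ax (fus_left L1 L2 φ hφ)),
    canon_global hT hD false (fun φ hφ => .ax (fus_right L1 L2 φ hφ)), ?_,
    hT.find hn2 (canon_delta hT hD (by omega)) h⟩
  intro C hC hb T hT' hCT
  exact hT.all hn1 (show PGlobal (fusionE L1 L2) (dec N1) (dec N1) from .prem)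
    ((hD n (by omega) C hC).1 hb) hT' hCT

theorem local_model (hS1 : ContainsS5 L1 none) (hS2 : ContainsS5 L2 none)
    (hA1 : AdmitsEHomog none L1) (hA2 : AdmitsEHomog none L2) {N D : ℕ}
    (h : LocalCrit L1 L2 N D) : ∃ F : KFrame (Option (Unit ⊕ Unit)),
      FrameFor F (fusionE L1 L2) ∧ ∃ (V : ℕ → F.W → Prop) (x : F.W), ¬ PVal V (dec N) x := by
  obtain ⟨κ1, -, hk1⟩ := hA1
  obtain ⟨κ2, -, hk2⟩ := hA2
  obtain ⟨h0, hg1, hg2, C, hC, hDC, T, hT, hCT, hTN⟩ := h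
  have hmem : sigOf (N + 1) C ∈ sigs D (· < N + 1 + 1) := ⟨N + 1, by simp, C, hC, hDC, rfl⟩
  obtain ⟨F, hF, V, h3, -⟩ := glue_model hS1 hS2 ⟨_, hmem⟩
    (local_side (κ := max κ1 κ2) hS1 (hk1 _ (le_max_left _ _)) h0 hg1)
    (local_side (κ := max κ1 κ2) hS2 (hk2 _ (le_max_right _ _)) h0 hg2)
  obtain ⟨x, hx⟩ := h3 _ hmem _ ⟨T, hT, hCT, rfl⟩
  refine ⟨F, hF, V, x, fun h => ?_⟩
  exact hTN ((hx N (by simp)).1 h).2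

theorem global_model (hS1 : ContainsS5 L1 none) (hS2 : ContainsS5 L2 none)
    (hA1 : AdmitsEHomogGlobal none L1) (hA2 : AdmitsEHomogGlobal none L2) {N1 N2 n D : ℕ}
    (hn1 : N1 < n) (hn2 : N2 < n)
    (h : GlobalCrit L1 L2 N1 N2 n D) : ∃ F : KFrame (Option (Unit ⊕ Unit)),
      FrameFor F (fusionE L1 L2) ∧ ∃ (V : ℕ → F.W → Prop), (∀ x, PVal V (dec N1) x) ∧
        ∃ (x : F.W), ¬ PVal V (dec N2) x := by
  obtain ⟨κ1, -, hk1⟩ := hA1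
  obtain ⟨κ2, -, hk2⟩ := hA2
  obtain ⟨hg1, hg2, hall, C, hC, hDC, T, hT, hCT, hTN⟩ := h
  have hmem : sigOf n C ∈ sigs D (· = n) := ⟨n, rfl, C, hC, hDC, rfl⟩
  obtain ⟨F, hF, V, h3, h4⟩ := glue_model hS1 hS2 ⟨_, hmem⟩
    (global_side (κ := max κ1 κ2) (hk1 _ (le_max_left _ _)) hg1)
    (global_side (κ := max κ1 κ2) (hk2 _ (le_max_right _ _)) hg2)
  refine ⟨F, hF, V, ?_, ?_⟩
  · intro x
    obtain ⟨S, ⟨k, rfl, C, hC, hDC, rfl⟩, c, ⟨T, hT, hCT, rfl⟩, h⟩ := h4 x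
    exact (h N1 hn1).2 ⟨hn1, hall C hC hDC T hT hCT⟩
  · obtain ⟨x, hx⟩ := h3 _ hmem _ ⟨T, hT, hCT, rfl⟩
    exact ⟨x, fun h => hTN ((hx N2 hn2).1 h).2⟩

theorem local_iff (hS1 : ContainsS5 L1 none) (hS2 : ContainsS5 L2 none)
    (hA1 : AdmitsEHomog none L1) (hA2 : AdmitsEHomog none L2) (N : ℕ) :
    dec N ∈ fusionE L1 L2 ↔ ¬ ∃ D < 2 ^ bnd (N + 1), LocalCrit L1 L2 N D := by
  constructor
  · rintro h ⟨D, -, hD⟩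
    obtain ⟨F, hF, V, x, hx⟩ := local_model hS1 hS2 hA1 hA2 hD
    exact hx (hF _ h V x)
  · intro h
    by_contra hc
    exact h (local_crit_of hS1 hc)

theorem global_iff (hS1 : ContainsS5 L1 none) (hS2 : ContainsS5 L2 none)
    (hA1 : AdmitsEHomogGlobal none L1) (hA2 : AdmitsEHomogGlobal none L2) (N1 N2 : ℕ) :
    PGlobal (fusionE L1 L2) (dec N1) (dec N2) ↔
      ¬ ∃ D < 2 ^ bnd (N1 + N2 + 1), GlobalCrit L1 L2 N1 N2 (N1 + N2 + 1) D := by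
  constructor
  · rintro h ⟨D, -, hD⟩
    obtain ⟨F, hF, V, hV, x, hx⟩ := global_model hS1 hS2 hA1 hA2 (by omega) (by omega) hD
    exact hx (global_sound h F hF V hV x)
  · intro h
    by_contra hc
    exact h (global_crit_of hS1 (by omega) (by omega) hc)

theorem local_complete (hS1 : ContainsS5 L1 none) (hS2 : ContainsS5 L2 none)
    (hA1 : AdmitsEHomog none L1) (hA2 : AdmitsEHomog none L2) : KComplete (fusionE L1 L2) := by
  intro φ h
  by_contra hc
  rw [← dec_encode φ] at hc h
  obtain ⟨D, -, hD⟩ := local_crit_of hS1 hc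
  obtain ⟨F, hF, V, x, hx⟩ := local_model hS1 hS2 hA1 hA2 hD
  exact hx (h F hF V x)

theorem global_complete (hS1 : ContainsS5 L1 none) (hS2 : ContainsS5 L2 none)
    (hA1 : AdmitsEHomogGlobal none L1) (hA2 : AdmitsEHomogGlobal none L2) :
    GloballyKComplete (fusionE L1 L2) := by
  intro φ ψ
  refine ⟨fun h F hF V hV => global_sound h F hF V hV, fun h => ?_⟩
  by_contra hc
  rw [← dec_encode φ, ← dec_encode ψ] at hc h
  generalize PF.encode eOC φ = N1 at *
  generalize PF.encode eOC ψ = N2 at *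
  obtain ⟨D, -, hD⟩ := global_crit_of hS1 (n := N1 + N2 + 1) (by omega) (by omega) hc
  obtain ⟨F, hF, V, hV, x, hx⟩ := global_model hS1 hS2 hA1 hA2 (by omega) (by omega) hD
  exact hx (h F hF V hV x)

end fus

section computability
variable {α : Type} [Primcodable α]

def PE (f : α → PF (Option Unit)) : Prop := Primrec fun a => PF.encode eOU (f a)

theorem PE.pr {f : α → PF (Option Unit)} (h : PE f) : Primrec fun a => PF.encode eOU (f a) := h
theorem PE.const (φ : PF (Option Unit)) : PE (fun _ : α => φ) := Primrec.const _
theorem PE.comp {β : Type} [Primcodable β] {f : α → PF (Option Unit)} (hf : PE f) {g : β → α}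
    (hg : Primrec g) : PE (fun b => f (g b)) := hf.pr.comp hg
theorem PE.atom {f : α → ℕ} (hf : Primrec f) : PE (fun a => .atom (f a)) :=
  Primrec₂.natPair.comp (Primrec.const 0) hf
theorem PE.neg {f : α → PF (Option Unit)} (hf : PE f) : PE (fun a => .neg (f a)) :=
  Primrec₂.natPair.comp (Primrec.const 1) hf
theorem PE.and {f g : α → PF (Option Unit)} (hf : PE f) (hg : PE g) :
    PE (fun a => .and (f a) (g a)) :=
  Primrec₂.natPair.comp (Primrec.const 2) (Primrec₂.natPair.comp hf hg)
theorem PE.box (m : Option Unit) {f : α → PF (Option Unit)} (hf : PE f) :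
    PE (fun a => .box m (f a)) :=
  Primrec₂.natPair.comp (Primrec.const 3) (Primrec₂.natPair.comp (Primrec.const (eOU m)) hf)
theorem PE.imp {f g : α → PF (Option Unit)} (hf : PE f) (hg : PE g) :
    PE (fun a => PF.imp (f a) (g a)) := (hf.and hg.neg).neg
theorem PE.or {f g : α → PF (Option Unit)} (hf : PE f) (hg : PE g) :
    PE (fun a => PF.or (f a) (g a)) := (hf.neg.and hg.neg).neg
theorem PE.dia (m : Option Unit) {f : α → PF (Option Unit)} (hf : PE f) :
    PE (fun a => PF.dia m (f a)) := (hf.neg.box m).neg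
theorem PE.fiff {f g : α → PF (Option Unit)} (hf : PE f) (hg : PE g) :
    PE (fun a => fiff (f a) (g a)) := (hf.imp hg).and (hg.imp hf)
theorem PE.cond {c : α → Bool} {f g : α → PF (Option Unit)} (hc : Primrec c) (hf : PE f)
    (hg : PE g) : PE (fun a => cond (c a) (f a) (g a)) :=
  (Primrec.cond hc hf hg).of_eq fun a => by dsimp only; cases c a <;> rfl
theorem PE.ite {c : α → Prop} [DecidablePred c] {f g : α → PF (Option Unit)} (hc : PrimrecPred c)
    (hf : PE f) (hg : PE g) : PE (fun a => if c a then f a else g a) :=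
  (Primrec.ite hc hf hg).of_eq fun a => by dsimp only; split_ifs <;> rfl
theorem PE.lit {c : α → Bool} {f : α → PF (Option Unit)} (hc : Primrec c) (hf : PE f) :
    PE (fun a => lit (c a) (f a)) := PE.cond hc hf hf.neg

theorem PE.bigAnd (t : PF (Option Unit)) {f : α → ℕ → PF (Option Unit)} {n : α → ℕ}
    (hf : PE (fun p : α × ℕ => f p.1 p.2)) (hn : Primrec n) :
    PE (fun a => bigAnd t (f a) (n a)) := by
  have h : Primrec₂ (fun (a : α) (p : ℕ × ℕ) =>
      Nat.pair 2 (Nat.pair p.2 (PF.encode eOU (f a p.1)))) :=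
    Primrec₂.natPair.comp (Primrec.const 2) (Primrec₂.natPair.comp
      (Primrec.snd.comp Primrec.snd)
      (hf.pr.comp (Primrec.fst.pair (Primrec.fst.comp Primrec.snd))))
  refine (Primrec.nat_rec' hn (Primrec.const (PF.encode eOU t)) h).of_eq fun a => ?_
  dsimp only
  induction n a with
  | zero => rfl
  | succ k ih => simp only [PropML.bigAnd, PF.encode, ih]

theorem PE.bigOr (t : PF (Option Unit)) {f : α → ℕ → PF (Option Unit)} {n : α → ℕ}
    (hf : PE (fun p : α × ℕ => f p.1 p.2)) (hn : Primrec n) :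
    PE (fun a => bigOr t (f a) (n a)) := by
  have h : Primrec₂ (fun (a : α) (p : ℕ × ℕ) =>
      Nat.pair 1 (Nat.pair 2 (Nat.pair (Nat.pair 1 p.2)
        (Nat.pair 1 (PF.encode eOU (f a p.1)))))) :=
    Primrec₂.natPair.comp (Primrec.const 1) (Primrec₂.natPair.comp (Primrec.const 2)
      (Primrec₂.natPair.comp
      (Primrec₂.natPair.comp (Primrec.const 1) (Primrec.snd.comp Primrec.snd))
      (Primrec₂.natPair.comp (Primrec.const 1)
        (hf.pr.comp (Primrec.fst.pair (Primrec.fst.comp Primrec.snd))))))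
  refine (Primrec.nat_rec' hn (Primrec.const (PF.encode eOU (.neg t))) h).of_eq fun a => ?_
  dsimp only
  induction n a with
  | zero => rfl
  | succ k ih => simp only [ih]; rfl

theorem pr_pow2 : Primrec (fun n : ℕ => 2 ^ n) :=
  (Primrec₂.unpaired'.1 Nat.Primrec.pow).comp (Primrec.const 2) Primrec.id

theorem pr_testBit {f g : α → ℕ} (hf : Primrec f) (hg : Primrec g) :
    Primrec (fun a => (f a).testBit (g a)) := by
  have h : PrimrecPred (fun a => f a / 2 ^ g a % 2 = 1) :=
    Primrec.eq.comp (Primrec.nat_mod.comp (Primrec.nat_div.comp hf (pr_pow2.comp hg))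
      (Primrec.const 2)) (Primrec.const 1)
  exact h.decide.of_eq fun a => Nat.testBit_eq_decide_div_mod_eq.symm

theorem pr_tg : Primrec tg := Primrec.fst.comp Primrec.unpair
theorem pr_pl : Primrec pl := Primrec.snd.comp Primrec.unpair
theorem pr_opc : Primrec opc := Primrec.fst.comp (Primrec.unpair.comp pr_pl)
theorem pr_ar : Primrec ar := Primrec.snd.comp (Primrec.unpair.comp pr_pl)

theorem PE.typeF {T k : α → ℕ} (hT : Primrec T) (hk : Primrec k) :
    PE (fun a => typeF .atom (T a) (k a)) :=
  PE.bigAnd _ (PE.lit (pr_testBit (hT.comp Primrec.fst) Primrec.snd) (PE.atom Primrec.snd)) hk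

theorem PE.chi {k C : α → ℕ} (hk : Primrec k) (hC : Primrec C) :
    PE (fun a => chi .atom none (k a) (C a)) :=
  PE.bigAnd _ (PE.lit (pr_testBit (hC.comp Primrec.fst) Primrec.snd)
    (PE.dia none (PE.typeF Primrec.snd (hk.comp Primrec.fst)))) (pr_pow2.comp hk)

theorem PE.delta {D k : α → ℕ} (hD : Primrec D) (hk : Primrec k) :
    PE (fun a => delta .atom none (D a) (k a)) :=
  PE.bigOr _ (PE.cond (pr_testBit (hD.comp Primrec.fst)
    (Primrec₂.natPair.comp (hk.comp Primrec.fst) Primrec.snd))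
    (PE.chi (hk.comp Primrec.fst) Primrec.snd) (PE.const _)) (pr_pow2.comp (pr_pow2.comp hk))

theorem PE.coF (s : Bool) {f : α → ℕ} (hf : Primrec f) :
    PE (fun a => coF .atom none (some ()) s (f a)) := by
  suffices h : PE (fun a : ℕ => PropML.coF .atom none (some ()) s a) from h.comp hf
  unfold PropML.coF
  refine PE.ite (Primrec.eq.comp pr_tg (Primrec.const 0)) (PE.const _) ?_
  refine PE.ite (Primrec.eq.comp pr_tg (Primrec.const 1))
    ((PE.atom Primrec.id).fiff (PE.atom pr_pl).neg) ?_
  refine PE.ite (Primrec.eq.comp pr_tg (Primrec.const 2))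
    ((PE.atom Primrec.id).fiff ((PE.atom pr_opc).and (PE.atom pr_ar))) ?_
  refine PE.ite (Primrec.eq.comp pr_opc (Primrec.const 0))
    ((PE.atom Primrec.id).fiff ((PE.atom pr_ar).box none)) ?_
  have h1 : PrimrecPred (fun a : ℕ => opc a = 1) := Primrec.eq.comp pr_opc (Primrec.const 1)
  exact PE.ite (Primrec.eq.comp h1.decide (Primrec.const s))
    ((PE.atom Primrec.id).fiff ((PE.atom pr_ar).box (some ()))) (PE.const _)

theorem PE.defsF (s : Bool) {k : α → ℕ} (hk : Primrec k) :
    PE (fun a => defsF .atom none (some ()) s (k a)) :=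
  PE.bigAnd _ (PE.coF s Primrec.snd) hk

theorem PE.GF (s : Bool) {D k : α → ℕ} (hD : Primrec D) (hk : Primrec k) :
    PE (fun a => GF .atom none (some ()) s (D a) (k a)) := by
  have hd : PE (fun p : α × (ℕ × ℕ) => PF.and (PropML.delta .atom none (D p.1) (p.2.1 + 1))
      (PropML.defsF .atom none (some ()) s (p.2.1 + 1))) :=
    (PE.delta (hD.comp Primrec.fst)
      (Primrec.succ.comp (Primrec.fst.comp Primrec.snd))).and
      (PE.defsF s (Primrec.succ.comp (Primrec.fst.comp Primrec.snd)))
  have h : Primrec₂ (fun (a : α) (p : ℕ × ℕ) => Nat.pair 3 (Nat.pair (eOU none)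
      (Nat.pair 2 (Nat.pair (PF.encode eOU (PF.and (PropML.delta .atom none (D a) (p.1 + 1))
      (PropML.defsF .atom none (some ()) s (p.1 + 1))))
      (Nat.pair 3 (Nat.pair (eOU (some ())) p.2)))))) :=
    Primrec₂.natPair.comp (Primrec.const 3) (Primrec₂.natPair.comp (Primrec.const _)
      (Primrec₂.natPair.comp (Primrec.const 2) (Primrec₂.natPair.comp hd.pr
        (Primrec₂.natPair.comp (Primrec.const 3) (Primrec₂.natPair.comp (Primrec.const _)
          (Primrec.snd.comp Primrec.snd))))))
  refine (Primrec.nat_rec' hk (Primrec.const (PF.encode eOU (PropML.tp .atom))) h).of_eq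
    fun a => ?_
  dsimp only
  induction k a with
  | zero => rfl
  | succ k ih => simp only [ih]; rfl

/-- computable predicates -/
def CP (p : α → Prop) : Prop := ∃ f : α → Bool, Computable f ∧ ∀ a, (f a = true ↔ p a)

theorem CP.computablePred {p : α → Prop} (h : CP p) : ComputablePred p := by
  classical
  obtain ⟨f, hf, h⟩ := h
  refine ⟨inferInstance, hf.of_eq fun a => ?_⟩
  rw [Bool.eq_iff_iff, h a, decide_eq_true_eq]

theorem CP.of_computablePred {p : α → Prop} (h : ComputablePred p) : CP p := by
  obtain ⟨_, h⟩ := h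
  exact ⟨_, h, fun a => decide_eq_true_iff⟩

theorem CP.of_iff {p q : α → Prop} (h : CP p) (H : ∀ a, p a ↔ q a) : CP q := by
  obtain ⟨f, hf, h⟩ := h
  exact ⟨f, hf, fun a => (h a).trans (H a)⟩

theorem CP.comp {β : Type} [Primcodable β] {p : α → Prop} (h : CP p) {g : β → α}
    (hg : Computable g) : CP (fun b => p (g b)) := by
  obtain ⟨f, hf, h⟩ := h
  exact ⟨_, hf.comp hg, fun a => h _⟩

theorem CP.bool {f : α → Bool} (hf : Primrec f) : CP (fun a => f a = true) :=
  ⟨f, hf.to_comp, fun _ => Iff.rfl⟩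

theorem CP.not {p : α → Prop} (h : CP p) : CP (fun a => ¬ p a) := by
  obtain ⟨f, hf, h⟩ := h
  exact ⟨_, Primrec.not.to_comp.comp hf, fun a => by simp [← h a]⟩

theorem CP.and {p q : α → Prop} (hp : CP p) (hq : CP q) : CP (fun a => p a ∧ q a) := by
  obtain ⟨f, hf, h⟩ := hp
  obtain ⟨g, hg, h'⟩ := hq
  exact ⟨_, Primrec.and.to_comp.comp hf hg, fun a => by simp [← h a, ← h' a]⟩

theorem CP.imp {p q : α → Prop} (hp : CP p) (hq : CP q) : CP (fun a => p a → q a) :=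
  (hp.and hq.not).not.of_iff fun a => by tauto

theorem CP.ball {p : α → ℕ → Prop} {b : α → ℕ} (hb : Primrec b)
    (hp : CP (fun x : α × ℕ => p x.1 x.2)) : CP (fun a => ∀ i < b a, p a i) := by
  obtain ⟨f, hf, h⟩ := hp
  have hs : Computable₂ (fun (a : α) (x : ℕ × Bool) => x.2 && f (a, x.1)) :=
    Primrec.and.to_comp.comp (Computable.snd.comp Computable.snd)
      (hf.comp (Computable.fst.pair (Computable.fst.comp Computable.snd)))
  refine ⟨_, Computable.nat_rec hb.to_comp (Computable.const true) hs, fun a => ?_⟩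
  dsimp only
  induction b a with
  | zero => simp
  | succ n ih =>
    simp only [Bool.and_eq_true, ih, h, Nat.lt_succ_iff_lt_or_eq]
    constructor
    · rintro ⟨h1, h2⟩ i (h | rfl)
      · exact h1 i h
      · exact h2
    · exact fun h => ⟨fun i hi => h i (Or.inl hi), h n (Or.inr rfl)⟩

theorem CP.bex {p : α → ℕ → Prop} {b : α → ℕ} (hb : Primrec b)
    (hp : CP (fun x : α × ℕ => p x.1 x.2)) : CP (fun a => ∃ i < b a, p a i) :=
  (CP.ball (p := fun a i => ¬ p a i) hb hp.not).not.of_iff fun a => by push Not; rfl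

theorem encode_inj {φ ψ : PF (Option Unit)} (h : PF.encode eOU φ = PF.encode eOU ψ) : φ = ψ := by
  induction φ generalizing ψ with
  | atom n =>
    cases ψ <;> simp_all [PF.encode]
  | neg φ ih =>
    cases ψ <;> simp only [PF.encode, Nat.pair_eq_pair] at h <;> try omega
    rw [ih h.2]
  | and φ ψ ih1 ih2 =>
    cases ψ <;> simp only [PF.encode, Nat.pair_eq_pair] at h <;> try omega
    rw [ih1 h.2.1, ih2 h.2.2]
  | box m φ ih =>
    cases ψ <;> simp only [PF.encode, Nat.pair_eq_pair] at h <;> try omega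
    rename_i m' _
    rw [ih h.2.2]
    congr 1
    rcases m with _ | ⟨⟩ <;> rcases m' with _ | ⟨⟩ <;> simp_all [eOU]

theorem CP.mem {L : Set (PF (Option Unit))} (hL : DecidableP eOU L) {f : α → PF (Option Unit)}
    (hf : PE f) : CP (fun a => f a ∈ L) :=
  ((CP.of_computablePred hL).comp hf.pr.to_comp).of_iff fun a =>
    ⟨fun ⟨_, h, h'⟩ => encode_inj h' ▸ h, fun h => ⟨_, h, rfl⟩⟩

theorem CP.glob {L : Set (PF (Option Unit))} (hL : GloballyDecidableP eOU L)
    {f g : α → PF (Option Unit)}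
    (hf : PE f) (hg : PE g) : CP (fun a => PGlobal L (f a) (g a)) :=
  ((CP.of_computablePred hL).comp (Primrec.pair hf.pr hg.pr).to_comp).of_iff fun a =>
    ⟨fun ⟨_, _, h, h1, h2⟩ => encode_inj h1 ▸ encode_inj h2 ▸ h, fun h => ⟨_, _, h, rfl, rfl⟩⟩

theorem CP.localGood {L : Set (PF (Option Unit))} (hL : DecidableP eOU L) (s : Bool)
    {D n : α → ℕ} (hD : Primrec D) (hn : Primrec n) : CP (fun a => LocalGood s L (D a) (n a)) := by
  unfold LocalGood
  have hk : Primrec (fun x : (α × ℕ) × ℕ => x.1.2) := Primrec.snd.comp Primrec.fst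
  have hD' : Primrec (fun x : (α × ℕ) × ℕ => D x.1.1) := hD.comp (Primrec.fst.comp Primrec.fst)
  refine CP.ball (Primrec.succ.comp hn) (CP.ball (pr_pow2.comp (pr_pow2.comp Primrec.snd))
    (CP.imp (CP.bool (pr_testBit hD' (Primrec₂.natPair.comp hk Primrec.snd))) (CP.not ?_)))
  exact CP.mem hL (PE.neg (PE.and (PE.chi hk Primrec.snd) (PE.GF s hD' hk)))

theorem CP.globalGood {L : Set (PF (Option Unit))} (hL : GloballyDecidableP eOU L) (s : Bool)
    {D n : α → ℕ} (hD : Primrec D) (hn : Primrec n) :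
    CP (fun a => GlobalGood s L (D a) (n a)) := by
  unfold GlobalGood
  have hk : Primrec (fun x : α × ℕ => n x.1) := hn.comp Primrec.fst
  have hD' : Primrec (fun x : α × ℕ => D x.1) := hD.comp Primrec.fst
  refine CP.ball (pr_pow2.comp (pr_pow2.comp hn))
    (CP.imp (CP.bool (pr_testBit hD' (Primrec₂.natPair.comp hk Primrec.snd))) (CP.not ?_))
  exact CP.glob hL (PE.and (PE.delta hD' hk) (PE.defsF s hk)) (PE.neg (PE.chi hk Primrec.snd))

theorem pr_bnd : Primrec bnd :=
  Primrec.succ.comp (Primrec₂.natPair.comp Primrec.id (pr_pow2.comp pr_pow2))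

theorem CP.some {D n N : α → ℕ} (hD : Primrec D) (hn : Primrec n) (hN : Primrec N) :
    CP (fun a => ∃ C < 2 ^ 2 ^ (n a), (D a).testBit (Nat.pair (n a) C) = true ∧
      ∃ T < 2 ^ (n a), C.testBit T = true ∧ ¬ T.testBit (N a) = true) := by
  refine CP.bex (pr_pow2.comp (pr_pow2.comp hn)) (CP.and (CP.bool (pr_testBit
    (hD.comp Primrec.fst) (Primrec₂.natPair.comp (hn.comp Primrec.fst) Primrec.snd))) ?_)
  refine CP.bex (pr_pow2.comp (hn.comp Primrec.fst)) (CP.and (CP.bool (pr_testBit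
    (Primrec.snd.comp Primrec.fst) Primrec.snd)) (CP.not (CP.bool (pr_testBit Primrec.snd
    (hN.comp (Primrec.fst.comp Primrec.fst))))))

theorem CP.every {D n N : α → ℕ} (hD : Primrec D) (hn : Primrec n) (hN : Primrec N) :
    CP (fun a => ∀ C < 2 ^ 2 ^ (n a), (D a).testBit (Nat.pair (n a) C) = true →
      ∀ T < 2 ^ (n a), C.testBit T = true → T.testBit (N a) = true) := by
  refine CP.ball (pr_pow2.comp (pr_pow2.comp hn)) (CP.imp (CP.bool (pr_testBit
    (hD.comp Primrec.fst) (Primrec₂.natPair.comp (hn.comp Primrec.fst) Primrec.snd))) ?_)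
  refine CP.ball (pr_pow2.comp (hn.comp Primrec.fst)) (CP.imp (CP.bool (pr_testBit
    (Primrec.snd.comp Primrec.fst) Primrec.snd)) (CP.bool (pr_testBit Primrec.snd
    (hN.comp (Primrec.fst.comp Primrec.fst)))))

theorem cp_local {L1 L2 : Set (PF (Option Unit))} (h1 : DecidableP eOU L1)
    (h2 : DecidableP eOU L2) :
    CP (fun N : ℕ => ∃ D < 2 ^ bnd (N + 1), LocalCrit L1 L2 N D) := by
  unfold LocalCrit
  have hn : Primrec (fun x : ℕ × ℕ => x.1 + 1) := Primrec.succ.comp Primrec.fst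
  exact CP.bex (pr_pow2.comp (pr_bnd.comp Primrec.succ))
    (CP.and (CP.bool (pr_testBit Primrec.snd (Primrec.const _)))
    (CP.and (CP.localGood h1 true Primrec.snd hn) (CP.and (CP.localGood h2 false Primrec.snd hn)
    (CP.some Primrec.snd hn Primrec.fst))))

theorem cp_global {L1 L2 : Set (PF (Option Unit))} (h1 : GloballyDecidableP eOU L1)
    (h2 : GloballyDecidableP eOU L2) :
    CP (fun p : ℕ × ℕ => ∃ D < 2 ^ bnd (p.1 + p.2 + 1),
      GlobalCrit L1 L2 p.1 p.2 (p.1 + p.2 + 1) D) := by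
  unfold GlobalCrit
  have hn0 : Primrec (fun x : ℕ × ℕ => x.1 + x.2 + 1) :=
    Primrec.succ.comp (Primrec.nat_add.comp Primrec.fst Primrec.snd)
  have hn : Primrec (fun x : (ℕ × ℕ) × ℕ => x.1.1 + x.1.2 + 1) := hn0.comp Primrec.fst
  exact CP.bex (pr_pow2.comp (pr_bnd.comp hn0))
    (CP.and (CP.globalGood h1 true Primrec.snd hn) (CP.and (CP.globalGood h2 false Primrec.snd hn)
    (CP.and (CP.every Primrec.snd hn (Primrec.fst.comp Primrec.fst))
    (CP.some Primrec.snd hn (Primrec.snd.comp Primrec.fst)))))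

def norm (n : ℕ) : ℕ := PF.encode eOC (dec n)

theorem norm_eq (n : ℕ) : norm n =
    if tg n = 0 then n
    else if tg n = 1 then Nat.pair 1 (norm (pl n))
    else if tg n = 2 then Nat.pair 2 (Nat.pair (norm (opc n)) (norm (ar n)))
    else Nat.pair 3 (Nat.pair (min (opc n) 2) (norm (ar n))) := by
  split_ifs with h0 h1 h2
  · have h := Nat.pair_unpair n
    rw [norm, dec_atom h0, PF.encode, ← h0]; exact h
  · rw [norm, dec_neg h1]; rfl
  · rw [norm, dec_and h2]; rfl
  · rw [norm, dec_box (by omega), PF.encode]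
    congr 2
    unfold decOp
    split_ifs with h3 h4
    · rw [h3]; rfl
    · rw [h4]; rfl
    · rw [min_eq_right (by omega)]; rfl

theorem pr_norm : Primrec norm := by
  let g : Unit → List ℕ → Option ℕ := fun _ l => some (
    if tg l.length = 0 then l.length
    else if tg l.length = 1 then Nat.pair 1 (l.getD (pl l.length) 0)
    else if tg l.length = 2 then
      Nat.pair 2 (Nat.pair (l.getD (opc l.length) 0) (l.getD (ar l.length) 0))
    else Nat.pair 3 (Nat.pair (min (opc l.length) 2) (l.getD (ar l.length) 0)))
  have hl : Primrec (fun x : Unit × List ℕ => x.2.length) := Primrec.list_length.comp Primrec.snd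
  have hget : ∀ f : ℕ → ℕ, Primrec f →
      Primrec (fun x : Unit × List ℕ => x.2.getD (f x.2.length) 0) := fun f hf =>
    (Primrec.list_getD 0).comp Primrec.snd (hf.comp hl)
  have hg : Primrec₂ g := by
    refine Primrec.option_some.comp ?_
    refine Primrec.ite (Primrec.eq.comp (pr_tg.comp hl) (Primrec.const 0)) hl ?_
    refine Primrec.ite (Primrec.eq.comp (pr_tg.comp hl) (Primrec.const 1))
      (Primrec₂.natPair.comp (Primrec.const 1) (hget _ pr_pl)) ?_
    refine Primrec.ite (Primrec.eq.comp (pr_tg.comp hl) (Primrec.const 2))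
      (Primrec₂.natPair.comp (Primrec.const 2)
        (Primrec₂.natPair.comp (hget _ pr_opc) (hget _ pr_ar))) ?_
    exact Primrec₂.natPair.comp (Primrec.const 3) (Primrec₂.natPair.comp
      (Primrec.nat_min.comp (pr_opc.comp hl) (Primrec.const 2)) (hget _ pr_ar))
  have key := Primrec.nat_strong_rec (fun (_ : Unit) n => norm n) hg (by
    intro a n
    have hi : ∀ i < n, ((List.range n).map norm).getD i 0 = norm i := by
      intro i hi
      simp [List.getD_eq_getElem?_getD, hi]
    simp only [g, List.length_map, List.length_range]
    rw [norm_eq n]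
    congr 1
    split_ifs with h0 h1 h2
    · rfl
    · rw [hi _ (pl_lt h0)]
    · rw [hi _ (opc_lt h0), hi _ (ar_lt h0)]
    · rw [hi _ (ar_lt h0)])
  exact key.comp (Primrec.const ()) Primrec.id

theorem cp_norm {f : α → ℕ} (hf : Primrec f) : CP (fun a => norm (f a) = f a) := by
  have h : PrimrecPred (fun a => norm (f a) = f a) := Primrec.eq.comp (pr_norm.comp hf) hf
  exact CP.of_computablePred h.computablePred

end computability

theorem local_dec {L1 L2 : Set (PF (Option Unit))} (hS1 : ContainsS5 L1 none)
    (hS2 : ContainsS5 L2 none)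
    (hA1 : AdmitsEHomog none L1) (hA2 : AdmitsEHomog none L2) (hd1 : DecidableP eOU L1)
    (hd2 : DecidableP eOU L2) : DecidableP eOC (fusionE L1 L2) := by
  refine CP.computablePred (((cp_norm Primrec.id).and (cp_local hd1 hd2).not).of_iff fun N => ?_)
  rw [← local_iff hS1 hS2 hA1 hA2]
  constructor
  · rintro ⟨h1, h2⟩
    exact ⟨_, h2, h1⟩
  · rintro ⟨φ, h1, rfl⟩
    rw [id, norm, dec_encode]
    exact ⟨rfl, h1⟩

theorem global_dec {L1 L2 : Set (PF (Option Unit))} (hS1 : ContainsS5 L1 none)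
    (hS2 : ContainsS5 L2 none)
    (hA1 : AdmitsEHomogGlobal none L1) (hA2 : AdmitsEHomogGlobal none L2)
    (hd1 : GloballyDecidableP eOU L1)
    (hd2 : GloballyDecidableP eOU L2) : GloballyDecidableP eOC (fusionE L1 L2) := by
  refine CP.computablePred ((((cp_norm Primrec.fst).and (cp_norm Primrec.snd)).and
    (cp_global hd1 hd2).not).of_iff fun p => ?_)
  rw [← global_iff hS1 hS2 hA1 hA2]
  constructor
  · rintro ⟨⟨h1, h2⟩, h3⟩
    exact ⟨_, _, h3, h1, h2⟩
  · rintro ⟨φ, ψ, h, h1, h2⟩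
    rw [← h1, ← h2, norm, norm, dec_encode, dec_encode]
    exact ⟨⟨rfl, rfl⟩, h⟩


/-- Transfer of (global) Kripke completeness and (global)
decidability under fusions of bimodal logics sharing an S5 operator `□_E`
(designated by `none`) and admitting `E`-homogeneous models. -/
theorem fusionE_transfer (L1 L2 : Set (PF (Option Unit)))
    (h1 : IsPLogic L1) (h2 : IsPLogic L2)
    (hS1 : ContainsS5 L1 none) (hS2 : ContainsS5 L2 none) :
    (AdmitsEHomog none L1 → AdmitsEHomog none L2 →
      KComplete (fusionE L1 L2)) ∧
    (AdmitsEHomog none L1 → AdmitsEHomog none L2 →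
      DecidableP eOU L1 → DecidableP eOU L2 → DecidableP eOC (fusionE L1 L2)) ∧
    (AdmitsEHomogGlobal none L1 → AdmitsEHomogGlobal none L2 →
      GloballyKComplete (fusionE L1 L2)) ∧
    (AdmitsEHomogGlobal none L1 → AdmitsEHomogGlobal none L2 →
      GloballyDecidableP eOU L1 → GloballyDecidableP eOU L2 →
      GloballyDecidableP eOC (fusionE L1 L2)) := by
  exact ⟨local_complete hS1 hS2, local_dec hS1 hS2, global_complete hS1 hS2,
    global_dec hS1 hS2⟩

end PropML
end
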